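/- arXiv:1501.00333 — 2 statements merged into one kernel-verified Lean document; each statement's English description precedes it below -/
import Mathlib

section
/- Let G be a complex reductive group acting rationally on a finitely generated commutative C-algebra A by algebra automorphisms. Then the ring of invariants A^G is a finitely generated C-algebra. -/
/-!
The Reynolds operator makes `B = A^G` a direct summand of the `B`-module `A`. A retraction
`R : A → B` gives `I A ∩ B = I` for every ideal `I` of `B`, so `B` is Noetherian; by Noetherian
induction on ideals and base change of `R` along `B → B ⧸ P`, it suffices to treat a domain `B`
all of whose quotients by nonzero ideals are of finite type.

For such a `B`, generic finiteness of `A` over `B` provides a finitely generated `C ⊆ B` and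
`0 ≠ f ∈ C` with `B ⊆ C[1/f]`; enlarging `C` by lifts of generators of `B ⧸ (f)` one also gets
`B = C + f B`, so that `B ⧸ C` is `f`-power torsion and `f`-divisible. Then `b ⊗ 1 = 1 ⊗ b` in
`A ⊗[C] B` for all `b ∈ B`. Lifting this identity along a presentation `C[X₁, …, X_d] → A` and
applying the retraction yields, for the ideals `Jₙ = fⁿ B ∩ C`, one exponent `N` with
`f^N Jₙ ⊆ fⁿ C + Jₙ²` for all `n`; in terms of the `fⁿ`-torsion `Eₙ` of `B ⧸ C` this says
`f^N Eₙ ⊆ Jₙ Eₙ`. By divisibility, `Eₙ` needs no more generators than `E₁`, say `r`, so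
Cayley–Hamilton gives `(f^(N r) - j) Eₙ = 0` for some `j ∈ Jₙ`. Taking `n = L + 1` with `L = N r`
and writing `j = f^(L+1) w` with `w ∈ B`, multiplication by `1 - f w` maps `(C : f^(L+1))` into
`(C : f^L)`, and its `k`-th power maps `(C : f^(L+k))` into `(C : f^L)`. As `f` and `1 - f w` are
coprime in `C[w]`, the algebra `B` is generated over `C` by `w` and the finite `C`-module
`(C : f^L)`.
-/

open Submodule (torsionBy)
open scoped TensorProduct

section Module

variable {R M : Type*} [CommRing R] [AddCommGroup M] [Module R M]

theorem exists_pow_smul_eq_zero_of_isNoetherian [IsNoetherian R M] (f : R) :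
    ∃ N : ℕ, ∀ (m : ℕ) (x : M), f ^ m • x = 0 → f ^ N • x = 0 := by
  let φ : Module.End R M := algebraMap R (Module.End R M) f
  have mem_ker {n : ℕ} {x : M} : x ∈ LinearMap.ker (φ ^ n) ↔ f ^ n • x = 0 := by
    rw [← map_pow, LinearMap.mem_ker, Module.algebraMap_end_apply]
  obtain ⟨N, hN⟩ := φ.eventually_iSup_ker_pow_eq.exists
  refine ⟨N, fun m x hx ↦ mem_ker.mp (hN ▸ ?_)⟩
  exact le_iSup (fun m ↦ LinearMap.ker (φ ^ m)) m (mem_ker.mpr hx)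

theorem exists_pow_sub_smul_eq_zero [Module.Finite R M] {J : Ideal R} {a : R}
    (ha : ∀ x : M, a • x ∈ J • (⊤ : Submodule R M)) :
    ∃ j ∈ J, ∀ x : M, (a ^ (⊤ : Submodule R M).spanFinrank - j) • x = 0 := by
  obtain ⟨p, hmonic, hdeg, hcoeff, hp⟩ :=
    LinearMap.exists_monic_and_natDegree_eq_and_coeff_mem_pow_and_aeval_eq_zero R
      (algebraMap R (Module.End R M) a) J (by rintro _ ⟨x, rfl⟩; exact ha x)
  refine ⟨a ^ p.natDegree - p.eval a, ?_, fun x ↦ ?_⟩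
  · rw [Polynomial.eval_eq_sum_range, Finset.sum_range_succ, hmonic.coeff_natDegree, one_mul,
      sub_add_cancel_right, J.neg_mem_iff]
    refine J.sum_mem fun k hk ↦ J.mul_mem_right _ ?_
    exact Ideal.pow_le_self (Nat.sub_ne_zero_of_lt (Finset.mem_range.mp hk)) (hcoeff k)
  · rw [Polynomial.aeval_algebraMap_apply, Polynomial.aeval_def,
      Polynomial.eval₂_eq_eval_map] at hp
    rw [← hdeg, sub_sub_cancel]
    simpa using LinearMap.congr_fun hp x

theorem exists_pow_sub_smul_eq_zero_of_smul_mem {E : Submodule R M} (hE : E.FG) {r : ℕ}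
    (hr : E.spanFinrank ≤ r) {J : Ideal R} {a : R} (ha : ∀ x ∈ E, a • x ∈ J • E) :
    ∃ j ∈ J, ∀ x ∈ E, (a ^ r - j) • x = 0 := by
  have : Module.Finite R E := Module.Finite.iff_fg.mpr hE
  obtain ⟨j, hj, h⟩ := exists_pow_sub_smul_eq_zero (M := E) (J := J) (a := a) fun x ↦ by
    have := ha x x.2
    rwa [Submodule.mem_smul_top_iff]
  rw [Submodule.spanFinrank_top] at h
  refine ⟨a ^ (r - E.spanFinrank) * j, J.mul_mem_left _ hj, fun x hx ↦ ?_⟩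
  have hx : (a ^ E.spanFinrank - j) • x = 0 := congrArg Subtype.val (h ⟨x, hx⟩)
  rw [← Nat.sub_add_cancel hr, pow_add, Nat.add_sub_cancel, ← mul_sub, mul_smul, hx, smul_zero]

theorem torsionBy_pow_eq_span {f : R} (hdiv : Function.Surjective fun x : M ↦ f • x)
    {s : Set M} (hs : Submodule.span R s = torsionBy R M f) (n : ℕ) :
    ∃ g : M → M, torsionBy R M (f ^ (n + 1)) = Submodule.span R (g '' s) := by
  obtain ⟨g, hg : ∀ x, f ^ n • g x = x⟩ :=
    (show Function.Surjective fun x : M ↦ f ^ n • x by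
      simpa [smul_iterate] using hdiv.iterate n).hasRightInverse
  have hmap : (Submodule.span R (g '' s)).map (DistribSMul.toLinearMap R M (f ^ n)) =
      torsionBy R M f := by
    rw [Submodule.map_span, Set.image_image, ← hs]
    simp [hg]
  have le_span (m : ℕ) (hm : m ≤ n + 1) : torsionBy R M (f ^ m) ≤ Submodule.span R (g '' s) := by
    induction m with
    | zero => simp
    | succ m ih =>
      intro x hx
      have hfx : f ^ m • x ∈ torsionBy R M f := by
        rwa [Submodule.mem_torsionBy_iff, smul_smul, ← pow_succ']
      rw [← hmap] at hfx
      obtain ⟨t, ht, htx : f ^ n • t = f ^ m • x⟩ := hfx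
      have hsub : x - f ^ (n - m) • t ∈ torsionBy R M (f ^ m) := by
        rw [Submodule.mem_torsionBy_iff, smul_sub, smul_smul, ← pow_add,
          Nat.add_sub_cancel' (by omega), htx, sub_self]
      rw [← sub_add_cancel x (f ^ (n - m) • t)]
      exact add_mem (ih (by omega) hsub) (Submodule.smul_mem _ _ ht)
  refine ⟨g, le_antisymm (le_span _ le_rfl) (Submodule.span_le.mpr ?_)⟩
  rintro _ ⟨x, hx, rfl⟩
  have hx : f • x = 0 := (Submodule.mem_torsionBy_iff f x).mp (hs ▸ Submodule.subset_span hx)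
  rw [SetLike.mem_coe, Submodule.mem_torsionBy_iff, pow_succ', mul_smul, hg, hx]

theorem torsionBy_pow_fg_and_spanFinrank_le {f : R}
    (hdiv : Function.Surjective fun x : M ↦ f • x) (hfg : (torsionBy R M f).FG) (n : ℕ) :
    (torsionBy R M (f ^ (n + 1))).FG ∧
      (torsionBy R M (f ^ (n + 1))).spanFinrank ≤ (torsionBy R M f).spanFinrank := by
  classical
  obtain ⟨s, hcard, hs⟩ := hfg.exists_span_finset_card_eq_spanFinrank
  obtain ⟨g, hg⟩ := torsionBy_pow_eq_span hdiv hs n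
  rw [hg, ← Finset.coe_image, ← hcard]
  refine ⟨Submodule.fg_span (Finset.finite_toSet _), ?_⟩
  refine (Submodule.spanFinrank_span_le_ncard_of_finite (Finset.finite_toSet _)).trans ?_
  rw [Set.ncard_coe_finset]
  exact Finset.card_image_le

end Module

section Tensor

variable {C : Type*} [CommRing C]

theorem isNoetherianRing_tensorProduct (S B : Type*) [CommRing S] [CommRing B] [Algebra C S]
    [Algebra C B] [Algebra.FiniteType C S] [IsNoetherianRing B] : IsNoetherianRing (S ⊗[C] B) :=
  have : IsNoetherianRing (B ⊗[C] S) := Algebra.FiniteType.isNoetherianRing B _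
  isNoetherianRing_of_ringEquiv _ (Algebra.TensorProduct.comm C B S).toRingEquiv

theorem map_mem_mul_of_forall_mem {S : Type*} [CommRing S] [Algebra C S] {J K : Ideal C}
    {I : Ideal S} (ψ : S →ₗ[C] C) (hψ : ∀ i ∈ I, ψ i ∈ K) {x : S}
    (hx : x ∈ J.map (algebraMap C S) * I) : ψ x ∈ J * K := by
  have hmap : (J • I.restrictScalars C).map ψ ≤ J * K := by
    rw [Submodule.map_smul'']
    exact Submodule.smul_mono le_rfl (Submodule.map_le_iff_le_comap.mpr hψ)
  rw [← Ideal.smul_restrictScalars] at hmap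
  exact hmap ⟨x, hx, rfl⟩

end Tensor

section TorsionDense

variable {C B : Type*} [CommRing C] [CommRing B] [Algebra C B] {f : C}

variable (B) in
/-- The ideal `a B ∩ C` of `C`, contracted from the principal ideal of `B` generated by `a : C`. -/
def spanContraction (a : C) : Ideal C :=
  (Ideal.span {algebraMap C B a}).comap (algebraMap C B)

theorem mem_spanContraction {a c : C} :
    c ∈ spanContraction B a ↔ ∃ b : B, a • b = algebraMap C B c := by
  simp [spanContraction, Ideal.mem_span_singleton', Algebra.smul_def, mul_comm]

variable (B) in
/-- The `C`-submodule `(C : a)` of all `b : B` for which `a • b` lies in the image of `C`, i.e. the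
preimage in `B` of the `a`-torsion of `B ⧸ C`. -/
def oneColon (a : C) : Submodule C B :=
  (1 : Submodule C B).comap (LinearMap.lsmul C B a)

theorem mem_oneColon {a : C} {b : B} : b ∈ oneColon B a ↔ ∃ c, algebraMap C B c = a • b :=
  Submodule.mem_one

theorem map_mkQ_oneColon (a : C) :
    (oneColon B a).map (Submodule.mkQ 1) = torsionBy C (B ⧸ (1 : Submodule C B)) a := by
  have hcomap : (torsionBy C (B ⧸ (1 : Submodule C B)) a).comap (Submodule.mkQ 1) =
      oneColon B a := by
    ext b
    rw [Submodule.mem_comap, Submodule.mem_torsionBy_iff, ← map_smul, Submodule.mkQ_apply,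
      Submodule.Quotient.mk_eq_zero]
    rfl
  rw [← hcomap, Submodule.map_comap_eq_of_surjective (Submodule.mkQ_surjective 1)]

theorem fg_oneColon [IsNoetherianRing C] {a : C} (ha : IsSMulRegular B a) : (oneColon B a).FG := by
  have : IsNoetherian C (1 : Submodule C B) :=
    isNoetherian_of_fg_of_noetherian _
      (Submodule.one_eq_span (R := C) (A := B) ▸ Submodule.fg_span_singleton 1)
  refine Submodule.fg_of_fg_map_injective (LinearMap.lsmul C B a) ha ?_
  exact isNoetherian_submodule.mp this _ (Submodule.map_comap_le _ _)

theorem exists_smul_eq_of_mem_spanContraction_sq {a x : C} (hx : x ∈ spanContraction B a ^ 2) :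
    ∃ b : B, a • b = algebraMap C B x ∧
      Submodule.Quotient.mk b ∈ spanContraction B a • torsionBy C (B ⧸ (1 : Submodule C B)) a := by
  rw [pow_two] at hx
  induction hx using Submodule.mul_induction_on' with
  | mem_mul_mem x hx y hy =>
    obtain ⟨b, hb⟩ := mem_spanContraction.mp hy
    refine ⟨x • b, by rw [smul_comm, hb, Algebra.smul_def, map_mul], ?_⟩
    rw [← map_mkQ_oneColon]
    exact Submodule.smul_mem_smul hx (Submodule.mem_map_of_mem (mem_oneColon.mpr ⟨y, hb.symm⟩))
  | add x _ y _ ihx ihy =>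
    obtain ⟨b₁, hb₁, hb₁_mem⟩ := ihx
    obtain ⟨b₂, hb₂, hb₂_mem⟩ := ihy
    exact ⟨b₁ + b₂, by rw [smul_add, hb₁, hb₂, map_add], add_mem hb₁_mem hb₂_mem⟩

/-- The cokernel `B ⧸ C` of the structure map of a `C`-algebra `B` is `f`-power torsion and
`f`-divisible, both conditions being expressed through elements of `B`. For injective structure maps
and `f` regular on `B` this says that `B ⊆ C[1/f]` and that `C` is `f`-adically dense in `B`. -/
structure IsTorsionDense (f : C) (B : Type*) [CommRing B] [Algebra C B] : Prop where
  exists_algebraMap_eq_pow_smul (b : B) : ∃ (m : ℕ) (c : C), algebraMap C B c = f ^ m • b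
  exists_eq_add_smul (b : B) : ∃ (c : C) (b' : B), b = algebraMap C B c + f • b'

namespace IsTorsionDense

theorem exists_eq_add_pow_smul (h : IsTorsionDense f B) (n : ℕ) (b : B) :
    ∃ (c : C) (b' : B), b = algebraMap C B c + f ^ n • b' := by
  induction n with
  | zero => exact ⟨0, b, by simp⟩
  | succ n ih =>
    obtain ⟨c, b', rfl⟩ := ih
    obtain ⟨c', b'', rfl⟩ := h.exists_eq_add_smul b'
    refine ⟨c + f ^ n * c', b'', ?_⟩
    rw [smul_add, smul_smul, ← pow_succ, map_add, map_mul, Algebra.smul_def _ (algebraMap C B c'),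
      add_assoc]

theorem surjective_smul_quotient_one (h : IsTorsionDense f B) :
    Function.Surjective fun x : B ⧸ (1 : Submodule C B) ↦ f • x := by
  intro x
  obtain ⟨b, rfl⟩ := Submodule.Quotient.mk_surjective _ x
  obtain ⟨c, b', rfl⟩ := h.exists_eq_add_smul b
  refine ⟨Submodule.Quotient.mk b', ?_⟩
  change f • Submodule.Quotient.mk b' = _
  rw [← Submodule.Quotient.mk_smul, eq_comm, Submodule.Quotient.eq, add_sub_cancel_right]
  exact Submodule.mem_one.mpr ⟨c, rfl⟩

theorem nonempty_algHom_quotient_spanContraction (h : IsTorsionDense f B) (n : ℕ) :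
    Nonempty (B →ₐ[C] C ⧸ spanContraction B (f ^ n)) := by
  let q : C →ₐ[C] B ⧸ Ideal.span {algebraMap C B (f ^ n)} := Algebra.ofId C _
  have hq : Function.Surjective q := fun x ↦ by
    obtain ⟨b, rfl⟩ := Ideal.Quotient.mk_surjective x
    obtain ⟨c, b', rfl⟩ := h.exists_eq_add_pow_smul n b
    refine ⟨c, Ideal.Quotient.eq.mpr ?_⟩
    rw [sub_add_cancel_left, neg_mem_iff, Algebra.smul_def]
    exact Ideal.mul_mem_right _ _ (Ideal.mem_span_singleton_self _)
  have hker : RingHom.ker q = spanContraction B (f ^ n) := by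
    ext c
    exact Ideal.Quotient.eq_zero_iff_mem
  exact ⟨((Ideal.quotientEquivAlgOfEq C hker).toAlgHom.comp
    (Ideal.quotientKerAlgEquivOfSurjective hq).symm.toAlgHom).comp (Ideal.Quotient.mkₐ C _)⟩

theorem algebraMap_tmul_one_eq_one_tmul (h : IsTorsionDense f B) {A : Type*} [CommRing A]
    [Algebra B A] [Algebra C A] [IsScalarTower C B A] [Algebra.FiniteType C A]
    [IsNoetherianRing B] (b : B) :
    algebraMap B A b ⊗ₜ[C] (1 : B) = 1 ⊗ₜ b := by
  -- `g` vanishes on `C`, so its image is `f`-power torsion and `f`-divisible, hence zero in a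
  -- Noetherian module.
  have := isNoetherianRing_tensorProduct (C := C) A B
  let g : B →ₗ[C] A ⊗[C] B :=
    ((Algebra.TensorProduct.includeLeft (S := C)).comp (IsScalarTower.toAlgHom C B A)).toLinearMap -
      Algebra.TensorProduct.includeRight.toLinearMap
  have g_algebraMap (c : C) : g (algebraMap C B c) = 0 := by
    simp only [g, LinearMap.sub_apply, AlgHom.toLinearMap_apply, AlgHom.commutes, sub_self]
  obtain ⟨N, hN⟩ := exists_pow_smul_eq_zero_of_isNoetherian (M := A ⊗[C] B)
    (algebraMap C (A ⊗[C] B) f)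
  obtain ⟨c, b', rfl⟩ := h.exists_eq_add_pow_smul N b
  obtain ⟨m, c', hc'⟩ := h.exists_algebraMap_eq_pow_smul b'
  have hgb' : f ^ N • g b' = 0 := by
    have := hN m (g b')
    simp only [← map_pow, algebraMap_smul] at this
    exact this (by rw [← map_smul, ← hc', g_algebraMap])
  refine sub_eq_zero.mp (show g _ = 0 from ?_)
  rw [map_add, g_algebraMap, map_smul, hgb', add_zero]

theorem exists_pow_smul_eq_tmul_one (h : IsTorsionDense f B) {M : Type*} [AddCommGroup M]
    [Module C M] (x : M ⊗[C] B) : ∃ (m : ℕ) (y : M), f ^ m • x = y ⊗ₜ 1 := by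
  induction x with
  | zero => exact ⟨0, 0, by simp⟩
  | tmul y b =>
    obtain ⟨m, c, hc⟩ := h.exists_algebraMap_eq_pow_smul b
    refine ⟨m, c • y, ?_⟩
    rw [← TensorProduct.tmul_smul, ← hc, Algebra.algebraMap_eq_smul_one, TensorProduct.tmul_smul,
      TensorProduct.smul_tmul']
  | add x₁ x₂ h₁ h₂ =>
    obtain ⟨m₁, y₁, h₁⟩ := h₁
    obtain ⟨m₂, y₂, h₂⟩ := h₂
    refine ⟨m₁ + m₂, f ^ m₂ • y₁ + f ^ m₁ • y₂, ?_⟩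
    rw [smul_add, pow_add, mul_comm, mul_smul, h₁, mul_comm, mul_smul, h₂, TensorProduct.add_tmul,
      TensorProduct.smul_tmul', TensorProduct.smul_tmul']

section UniformExponent

variable {S : Type*} [CommRing S] [Algebra C S] {I : Ideal S}

theorem exists_pow_smul_eq_one_tmul (h : IsTorsionDense f B) {M : Type*} [AddCommGroup M]
    [Module C M] [Module S M] [IsScalarTower C S M] (q : (S ⊗[C] B) ⊗[S] M) :
    ∃ (m : ℕ) (x : M), f ^ m • q = 1 ⊗ₜ x := by
  let e : (S ⊗[C] B) ⊗[S] M ≃ₗ[S] M ⊗[C] B := TensorProduct.comm S _ _ ≪≫ₗ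
    TensorProduct.AlgebraTensorModule.cancelBaseChange C S S M B
  obtain ⟨m, x, hx⟩ := h.exists_pow_smul_eq_tmul_one (e q)
  refine ⟨m, x, e.injective ?_⟩
  rw [show e (f ^ m • q) = f ^ m • e q from LinearMap.map_smul_of_tower e.toLinearMap _ _, hx]
  simp [e, Algebra.TensorProduct.one_def]

theorem exists_pow_smul_eq_zero_of_liftBaseChange_eq_zero (h : IsTorsionDense f B)
    [Module.Flat C S] (hinj : Function.Injective (algebraMap C B)) {q : (S ⊗[C] B) ⊗[S] I}
    (hq : ((Algebra.linearMap S (S ⊗[C] B)).comp I.subtype).liftBaseChange (S ⊗[C] B) q = 0) :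
    ∃ m : ℕ, f ^ m • q = 0 := by
  obtain ⟨m, i, hi⟩ := h.exists_pow_smul_eq_one_tmul q
  have hi0 : algebraMap S (S ⊗[C] B) i = 0 := by
    have := congrArg (((Algebra.linearMap S (S ⊗[C] B)).comp I.subtype).liftBaseChange _) hi
    rw [LinearMap.map_smul_of_tower, hq, smul_zero, LinearMap.liftBaseChange_one_tmul] at this
    exact this.symm
  have : i = 0 := Subtype.ext <|
    Algebra.TensorProduct.includeLeft_injective (S := C) hinj (hi0.trans (map_zero _).symm)
  exact ⟨m, by rw [hi, this, TensorProduct.tmul_zero]⟩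

theorem mem_map_spanContraction_mul_of_one_tmul_eq (h : IsTorsionDense f B) {n : ℕ} {i : I}
    {q : (S ⊗[C] B) ⊗[S] I} (hq : 1 ⊗ₜ i = f ^ n • q) :
    (i : S) ∈ (spanContraction B (f ^ n)).map (algebraMap C S) * I := by
  obtain ⟨ρ⟩ := h.nonempty_algHom_quotient_spanContraction n
  let J := (spanContraction B (f ^ n)).map (algebraMap C S)
  let ρS : S ⊗[C] B →ₐ[S] S ⧸ J := Algebra.TensorProduct.lift (Algebra.ofId S _)
    ((Ideal.quotientMapₐ J (Algebra.ofId C S) Ideal.le_comap_map).comp ρ) fun _ _ ↦ .all _ _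
  have hfJ : algebraMap C S (f ^ n) ∈ J :=
    Ideal.mem_map_of_mem _ (mem_spanContraction.mpr ⟨1, by rw [Algebra.algebraMap_eq_smul_one]⟩)
  let θ : (S ⊗[C] B) ⊗[S] I →ₗ[S] I ⧸ (J • ⊤ : Submodule S I) :=
    (TensorProduct.quotTensorEquivQuotSMul I J).toLinearMap ∘ₗ ρS.toLinearMap.rTensor I
  have hθ : Submodule.Quotient.mk i = θ (1 ⊗ₜ i) := by simp [θ]
  obtain ⟨z, hz⟩ := Submodule.Quotient.mk_surjective _ (θ q)
  have hi : (Submodule.Quotient.mk i : I ⧸ (J • ⊤ : Submodule S I)) = 0 := by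
    rw [hθ, hq, LinearMap.map_smul_of_tower, ← hz, ← algebraMap_smul S (f ^ n) (_ : _ ⧸ _),
      ← Submodule.Quotient.mk_smul, Submodule.Quotient.mk_eq_zero]
    exact Submodule.smul_mem_smul hfJ Submodule.mem_top
  exact (Submodule.mem_smul_top_iff J I i).mp ((Submodule.Quotient.mk_eq_zero _).mp hi)

theorem exists_pow_smul_mem_map_spanContraction_mul (h : IsTorsionDense f B) [IsNoetherianRing B]
    (hinj : Function.Injective (algebraMap C B))
    [Algebra.FiniteType C S] [Module.Flat C S] (hI : I.FG) :
    ∃ N : ℕ, ∀ n : ℕ, ∀ x ∈ I, ∀ y ∈ I.map (algebraMap S (S ⊗[C] B)),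
      algebraMap S (S ⊗[C] B) x = f ^ n • y →
        f ^ N • x ∈ (spanContraction B (f ^ n)).map (algebraMap C S) * I := by
  -- `ker μ` is `f`-power torsion in a Noetherian module, so a single power of `f` kills it.
  have : IsNoetherianRing (S ⊗[C] B) := isNoetherianRing_tensorProduct S B
  have : Module.Finite S I := Module.Finite.iff_fg.mpr hI
  let μ := ((Algebra.linearMap S (S ⊗[C] B)).comp I.subtype).liftBaseChange (S ⊗[C] B)
  obtain ⟨N, hN⟩ := exists_pow_smul_eq_zero_of_isNoetherian (M := (S ⊗[C] B) ⊗[S] I)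
    (algebraMap C (S ⊗[C] B) f)
  simp only [← map_pow, algebraMap_smul] at hN
  refine ⟨N, fun n x hx y hy hxy ↦ ?_⟩
  obtain ⟨q, rfl⟩ : y ∈ LinearMap.range μ := by
    rw [LinearMap.range_liftBaseChange, LinearMap.range_comp, Submodule.range_subtype]
    exact hy
  have hμ : μ (1 ⊗ₜ ⟨x, hx⟩ - f ^ n • q) = 0 := by
    rw [map_sub, LinearMap.map_smul_of_tower, ← hxy]
    simp [μ]
  obtain ⟨m, hm⟩ := h.exists_pow_smul_eq_zero_of_liftBaseChange_eq_zero hinj hμ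
  refine h.mem_map_spanContraction_mul_of_one_tmul_eq (i := f ^ N • ⟨x, hx⟩) (q := f ^ N • q) ?_
  have := hN m _ hm
  rw [smul_sub, sub_eq_zero] at this
  rw [TensorProduct.tmul_smul, smul_comm, ← this]

end UniformExponent

section Retraction

variable {A : Type*} [CommRing A] [Algebra B A] [Algebra C A] [IsScalarTower C B A]

theorem one_tmul_sub_mem_map_ker (h : IsTorsionDense f B) [Algebra.FiniteType C A]
    [IsNoetherianRing B] {S : Type*} [CommRing S] [Algebra C S] {π : S →ₐ[C] A}
    (hπ : Function.Surjective π) {s : S} {b : B} (hs : π s = algebraMap B A b) :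
    1 ⊗ₜ b - s ⊗ₜ 1 ∈ (RingHom.ker π).map (algebraMap S (S ⊗[C] B)) := by
  have hker : 1 ⊗ₜ b - s ⊗ₜ 1 ∈ RingHom.ker (Algebra.TensorProduct.map π (AlgHom.id C B)) := by
    simp [RingHom.mem_ker, hs, h.algebraMap_tmul_one_eq_one_tmul]
  rwa [Algebra.TensorProduct.rTensor_ker _ hπ] at hker

theorem exists_linearMap_forall_sub_mem_spanContraction (h : IsTorsionDense f B) {S : Type*}
    [AddCommGroup S] [Module C S] [Module.Projective C S] (g : S →ₗ[C] B) (n : ℕ) :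
    ∃ ψ : S →ₗ[C] C, ∀ s c, g s = algebraMap C B c → ψ s - c ∈ spanContraction B (f ^ n) := by
  obtain ⟨ρ⟩ := h.nonempty_algHom_quotient_spanContraction n
  obtain ⟨ψ, hψ⟩ := Module.projective_lifting_property (spanContraction B (f ^ n)).mkQ
    (ρ.toLinearMap ∘ₗ g) (Submodule.mkQ_surjective _)
  refine ⟨ψ, fun s c hs ↦ Ideal.Quotient.eq.mp ?_⟩
  calc Ideal.Quotient.mk _ (ψ s) = ρ (g s) := LinearMap.congr_fun hψ s
    _ = algebraMap C _ c := by rw [hs, ρ.commutes]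

theorem exists_pow_mul_sub_mem_spanContraction_sq (h : IsTorsionDense f B) [IsNoetherianRing C]
    [IsNoetherianRing B] (hinj : Function.Injective (algebraMap C B)) [Algebra.FiniteType C A]
    {R : A →ₗ[B] B} (hR : R 1 = 1) :
    ∃ N : ℕ, ∀ n : ℕ, ∀ α ∈ spanContraction B (f ^ n),
      ∃ c, f ^ N * α - f ^ n * c ∈ spanContraction B (f ^ n) ^ 2 := by
  obtain ⟨d, π, hπ⟩ := Algebra.FiniteType.iff_quotient_mvPolynomial''.mp
    ‹Algebra.FiniteType C A›
  obtain ⟨N, hN⟩ := h.exists_pow_smul_mem_map_spanContraction_mul hinj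
    (I := RingHom.ker π) (IsNoetherian.noetherian _)
  refine ⟨N, fun n α hα ↦ ?_⟩
  set J := spanContraction B (f ^ n)
  obtain ⟨β, hβ⟩ := mem_spanContraction.mp hα
  obtain ⟨s, hs⟩ := hπ (algebraMap B A β)
  have hx : algebraMap C _ α - f ^ n • s ∈ RingHom.ker π := by
    rw [RingHom.mem_ker, map_sub, AlgHom.commutes, map_smul, hs,
      IsScalarTower.algebraMap_apply C B A, ← hβ, ← algebraMap.coe_smul, sub_self]
  have hxy : algebraMap _ (MvPolynomial (Fin d) C ⊗[C] B) (algebraMap C _ α - f ^ n • s) =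
      f ^ n • (1 ⊗ₜ β - s ⊗ₜ 1) := by
    rw [smul_sub, ← TensorProduct.tmul_smul, hβ, TensorProduct.smul_tmul', map_sub,
      ← IsScalarTower.algebraMap_apply, Algebra.TensorProduct.algebraMap_apply',
      Algebra.TensorProduct.algebraMap_apply, Algebra.algebraMap_self_apply]
  have hfx := hN n _ hx _ (h.one_tmul_sub_mem_map_ker hπ hs) hxy
  obtain ⟨ψ, hψ⟩ := h.exists_linearMap_forall_sub_mem_spanContraction
    (R.restrictScalars C ∘ₗ π.toLinearMap) n
  have ψ_mem_of_mem_ker : ∀ i ∈ RingHom.ker π, ψ i ∈ J := fun i hi ↦ by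
    have hi : π i = 0 := hi
    simpa using hψ i 0 (by simp [hi])
  have ψ_mem_sq : ψ (f ^ N • (algebraMap C _ α - f ^ n • s)) ∈ J ^ 2 :=
    pow_two J ▸ map_mem_mul_of_forall_mem ψ ψ_mem_of_mem_ker hfx
  refine ⟨f ^ N * ψ s, ?_⟩
  have mul_mem_sq : f ^ N * α * (ψ 1 - 1) ∈ J ^ 2 :=
    pow_two J ▸ Ideal.mul_mem_mul (J.mul_mem_left _ hα) (hψ 1 1 (by simp [hR]))
  convert sub_mem ψ_mem_sq mul_mem_sq using 1
  rw [Algebra.algebraMap_eq_smul_one]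
  simp only [map_smul, map_sub, smul_eq_mul]
  ring

theorem exists_pow_smul_mem_spanContraction_smul_torsionBy (h : IsTorsionDense f B)
    [IsNoetherianRing C] [IsNoetherianRing B] (hinj : Function.Injective (algebraMap C B))
    (hf : IsSMulRegular B f) [Algebra.FiniteType C A] {R : A →ₗ[B] B} (hR : R 1 = 1) :
    ∃ N : ℕ, ∀ n : ℕ, ∀ x ∈ torsionBy C (B ⧸ (1 : Submodule C B)) (f ^ n),
      f ^ N • x ∈ spanContraction B (f ^ n) • torsionBy C (B ⧸ (1 : Submodule C B)) (f ^ n) := by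
  obtain ⟨N, hN⟩ := h.exists_pow_mul_sub_mem_spanContraction_sq hinj hR
  refine ⟨N, fun n x hx ↦ ?_⟩
  rw [← map_mkQ_oneColon] at hx
  obtain ⟨β, hβ, rfl⟩ := hx
  obtain ⟨α, hα⟩ := mem_oneColon.mp hβ
  obtain ⟨c, hc⟩ := hN n α (mem_spanContraction.mpr ⟨β, hα.symm⟩)
  obtain ⟨b, hb, hbmem⟩ := exists_smul_eq_of_mem_spanContraction_sq hc
  have hβb : f ^ N • β - b = algebraMap C B c := by
    apply hf.pow n
    change f ^ n • (f ^ N • β - b) = f ^ n • algebraMap C B c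
    rw [smul_sub, hb, smul_comm, ← hα, map_sub, map_mul, map_mul, ← Algebra.smul_def,
      ← Algebra.smul_def, sub_sub_cancel]
  rwa [← map_smul, Submodule.mkQ_apply,
    (Submodule.Quotient.eq 1).mpr (hβb ▸ Submodule.mem_one.mpr ⟨c, rfl⟩)]

theorem exists_one_sub_mul_mem_oneColon (h : IsTorsionDense f B) [IsNoetherianRing C]
    [IsNoetherianRing B] (hinj : Function.Injective (algebraMap C B)) (hf : IsSMulRegular B f)
    [Algebra.FiniteType C A] {R : A →ₗ[B] B} (hR : R 1 = 1) :
    ∃ (L : ℕ) (w : B), ∀ b ∈ oneColon B (f ^ (L + 1)), (1 - f • w) * b ∈ oneColon B (f ^ L) := by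
  obtain ⟨N, hN⟩ := h.exists_pow_smul_mem_spanContraction_smul_torsionBy hinj hf hR
  let M := B ⧸ (1 : Submodule C B)
  have hfg : (torsionBy C M f).FG := map_mkQ_oneColon (B := B) f ▸ (fg_oneColon hf).map _
  let r := (torsionBy C M f).spanFinrank
  obtain ⟨hfgL, hrL⟩ :=
    torsionBy_pow_fg_and_spanFinrank_le h.surjective_smul_quotient_one hfg (N * r)
  obtain ⟨j, hj, hjM⟩ := exists_pow_sub_smul_eq_zero_of_smul_mem hfgL hrL (hN (N * r + 1))
  obtain ⟨w, hw⟩ := mem_spanContraction.mp hj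
  refine ⟨N * r, w, fun b hb ↦ ?_⟩
  have hjb := hjM _ (map_mkQ_oneColon (B := B) (f ^ (N * r + 1)) ▸ Submodule.mem_map_of_mem hb)
  rw [← map_smul, Submodule.mkQ_apply, Submodule.Quotient.mk_eq_zero, ← pow_mul] at hjb
  have hsmul : (f ^ (N * r) - j) • b = f ^ (N * r) • ((1 - f • w) * b) := by
    rw [sub_smul, Algebra.smul_def j, ← hw, sub_mul, smul_sub, one_mul, ← smul_mul_assoc,
      smul_smul, pow_succ]
  rwa [hsmul] at hjb

theorem one_sub_pow_mul_mem_oneColon {L : ℕ} {w : B}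
    (hw : ∀ b ∈ oneColon B (f ^ (L + 1)), (1 - f • w) * b ∈ oneColon B (f ^ L)) (k : ℕ) {b : B}
    (hb : b ∈ oneColon B (f ^ (L + k))) : (1 - f • w) ^ k * b ∈ oneColon B (f ^ L) := by
  induction k generalizing b with
  | zero => simpa using hb
  | succ k ih =>
    rw [pow_succ, mul_assoc]
    refine ih ?_
    have hfb : f ^ k • b ∈ oneColon B (f ^ (L + 1)) := by
      rw [mem_oneColon] at hb ⊢
      rwa [smul_smul, ← pow_add, add_right_comm]
    have := hw _ hfb
    rw [mem_oneColon] at this ⊢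
    rwa [mul_smul_comm, smul_smul, ← pow_add] at this

theorem finiteType (h : IsTorsionDense f B) [IsNoetherianRing C]
    [IsNoetherianRing B] (hinj : Function.Injective (algebraMap C B)) (hf : IsSMulRegular B f)
    [Algebra.FiniteType C A] {R : A →ₗ[B] B} (hR : R 1 = 1) : Algebra.FiniteType C B := by
  obtain ⟨L, w, hw⟩ := h.exists_one_sub_mul_mem_oneColon hinj hf hR
  obtain ⟨s, hs⟩ := fg_oneColon (B := B) (hf.pow L)
  let D : Subalgebra C B := Algebra.adjoin C (insert w s)
  let w' : D := ⟨w, Algebra.subset_adjoin (Set.mem_insert w s)⟩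
  have oneColon_le : oneColon B (f ^ L) ≤ Subalgebra.toSubmodule D := by
    rw [← hs, Submodule.span_le]
    exact (Set.subset_insert w s).trans Algebra.subset_adjoin
  have hcop : IsCoprime (algebraMap C D f) (1 - algebraMap C D f * w') := ⟨w', 1, by ring⟩
  refine ⟨Subalgebra.fg_def.mpr ⟨_, s.finite_toSet.insert w, Algebra.eq_top_iff.mpr fun b ↦ ?_⟩⟩
  obtain ⟨k, c, hc⟩ := h.exists_algebraMap_eq_pow_smul b
  obtain ⟨p, q, hpq⟩ := hcop.pow (m := k) (n := k)
  have hfb : f ^ k • b ∈ D := hc ▸ D.algebraMap_mem c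
  have hwb : (1 - f • w) ^ k * b ∈ D := by
    refine oneColon_le (one_sub_pow_mul_mem_oneColon hw k (mem_oneColon.mpr ⟨f ^ L * c, ?_⟩))
    rw [map_mul, hc, ← Algebra.smul_def, smul_smul, pow_add]
  have hb : b = p * (f ^ k • b) + q * ((1 - f • w) ^ k * b) := by
    have hpq : (p : B) * algebraMap C B f ^ k + q * (1 - algebraMap C B f * w) ^ k = 1 :=
      congrArg Subtype.val hpq
    rw [Algebra.smul_def, Algebra.smul_def, map_pow, ← mul_assoc, ← mul_assoc, ← add_mul, hpq,
      one_mul]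
  rw [hb]
  exact add_mem (mul_mem p.2 hfb) (mul_mem q.2 hwb)

end Retraction

end IsTorsionDense

end TorsionDense

section GenericFiniteness

open scoped Pointwise

universe u v

theorem exists_algHom_isAlgebraic_field {B : Type u} {A : Type v} [CommRing B] [IsDomain B]
    [CommRing A] [Algebra B A] [Algebra.FiniteType B A]
    (hinj : Function.Injective (algebraMap B A)) :
    ∃ (L : Type (max u v)) (_ : Field L) (_ : Algebra B L) (_ : A →ₐ[B] L),
      Algebra.IsAlgebraic B L ∧ Function.Injective (algebraMap B L) := by
  let K := FractionRing B
  have : Nontrivial (K ⊗[B] A) :=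
    (Algebra.TensorProduct.includeLeft_injective (S := B) (A := K) hinj).nontrivial
  obtain ⟨m, hm⟩ := Ideal.exists_maximal (K ⊗[B] A)
  let : Field ((K ⊗[B] A) ⧸ m) := Ideal.Quotient.field m
  have : Module.Finite K ((K ⊗[B] A) ⧸ m) := finite_of_finite_type_of_isJacobsonRing _ _
  refine ⟨(K ⊗[B] A) ⧸ m, inferInstance, inferInstance,
    (Ideal.Quotient.mkₐ B m).comp Algebra.TensorProduct.includeRight,
    (IsFractionRing.comap_isAlgebraic_iff (K := K)).mpr (Algebra.IsAlgebraic.of_finite K _), ?_⟩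
  rw [IsScalarTower.algebraMap_eq B K]
  exact (algebraMap K _).injective.comp (IsFractionRing.injective B K)

variable {k B L : Type*} [CommRing k] [CommRing B] [CommRing L] [Algebra k B] [Algebra B L]

theorem exists_finset_forall_isIntegral {s : Set L} (hs : s.Finite)
    (hint : ∀ x ∈ s, IsIntegral B x) :
    ∃ t : Finset B, ∀ C : Subalgebra k B, (t : Set B) ⊆ C → ∀ x ∈ s, IsIntegral C x := by
  classical
  choose! p hp hpx using hint
  refine ⟨hs.toFinset.biUnion fun x ↦ (p x).coeffs, fun C hC x hx ↦ ?_⟩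
  have hlifts : p x ∈ Polynomial.lifts (algebraMap C B) :=
    (Polynomial.lifts_iff_coeff_lifts _).mpr fun n ↦ by
      by_cases hn : (p x).coeff n = 0
      · exact ⟨0, by rw [hn, map_zero]⟩
      · exact ⟨⟨_, hC (Finset.mem_coe.mpr <| Finset.mem_biUnion.mpr
          ⟨x, hs.mem_toFinset.mpr hx, Polynomial.coeff_mem_coeffs hn⟩)⟩, rfl⟩
  obtain ⟨q, hq, -, hqmonic⟩ := Polynomial.lifts_and_natDegree_eq_and_monic hlifts (hp x hx)
  refine ⟨q, hqmonic, ?_⟩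
  rw [IsScalarTower.algebraMap_eq C B L, ← Polynomial.eval₂_map, hq, hpx x hx]

theorem fg_comap_adjoin_of_isIntegral {C : Type*} [CommRing C] [IsNoetherianRing C] [Algebra C B]
    [Algebra C L] [IsScalarTower C B L] (hinj : Function.Injective (algebraMap B L))
    {s : Set L} (hs : s.Finite) (hint : ∀ x ∈ s, IsIntegral C x) :
    ((Algebra.adjoin C s).comap (IsScalarTower.toAlgHom C B L)).FG := by
  refine Subalgebra.fg_of_fg_toSubmodule ?_
  refine Submodule.fg_of_fg_map_injective (IsScalarTower.toAlgHom C B L).toLinearMap hinj ?_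
  have := isNoetherian_of_fg_of_noetherian _ (fg_adjoin_of_finite hs hint)
  exact isNoetherian_submodule.mp this _ (Submodule.map_le_iff_le_comap.mpr le_rfl)

theorem fg_restrictScalars {C : Subalgebra k B} (hC : C.FG) {D : Subalgebra C B} (hD : D.FG) :
    (D.restrictScalars k).FG := by
  obtain ⟨s, hs, rfl⟩ := Subalgebra.fg_def.mp hC
  obtain ⟨t, ht, rfl⟩ := Subalgebra.fg_def.mp hD
  rw [← Algebra.adjoin_union_eq_adjoin_adjoin]
  exact Subalgebra.fg_def.mpr ⟨_, hs.union ht, rfl⟩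

theorem exists_fg_subalgebra_pow_mul_mem_of_isAlgebraic [IsNoetherianRing k] [IsDomain B]
    [Algebra k L] [IsScalarTower k B L] [Algebra.IsAlgebraic B L]
    (hinj : Function.Injective (algebraMap B L))
    {s : Set L} (hs : s.Finite) (hBs : ∀ b : B, algebraMap B L b ∈ Algebra.adjoin k s) :
    ∃ C : Subalgebra k B, C.FG ∧ ∃ g ∈ C, g ≠ 0 ∧ ∀ b, ∃ m : ℕ, g ^ m * b ∈ C := by
  classical
  obtain ⟨g, hg₀, hg⟩ := Algebra.IsAlgebraic.exists_integral_multiples B hs.toFinset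
  have hgs : ∀ x ∈ g • s, IsIntegral B x := by
    rintro _ ⟨x, hx, rfl⟩
    exact hg x (hs.mem_toFinset.mpr hx)
  have hgfin : (g • s).Finite := hs.image _
  obtain ⟨t, ht⟩ := exists_finset_forall_isIntegral (k := k) hgfin hgs
  let C₀ : Subalgebra k B := Algebra.adjoin k (insert g t : Set B)
  have hgC : g ∈ C₀ := Algebra.subset_adjoin (Set.mem_insert g _)
  have hC₀ : C₀.FG := Subalgebra.fg_def.mpr ⟨_, t.finite_toSet.insert g, rfl⟩
  have : IsNoetherianRing C₀ := isNoetherianRing_of_fg hC₀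
  let T : Subalgebra C₀ L := Algebra.adjoin C₀ (g • s)
  have hT : (T.comap (IsScalarTower.toAlgHom C₀ B L)).FG :=
    fg_comap_adjoin_of_isIntegral hinj hgfin
      (ht C₀ ((Set.subset_insert g _).trans Algebra.subset_adjoin))
  have hgT : algebraMap B L g ∈ T := T.algebraMap_mem ⟨g, hgC⟩
  have hgsT : g • s ⊆ (T : Set L) := Algebra.subset_adjoin
  refine ⟨_, fg_restrictScalars hC₀ hT, g, hgT, hg₀, fun b ↦ ?_⟩
  obtain ⟨m, hm⟩ := Algebra.pow_smul_mem_of_smul_subset_of_mem_adjoin g s (T.restrictScalars k)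
    hgsT (hBs b) hgT
  specialize hm m le_rfl
  rw [← algebraMap.coe_smul] at hm
  exact ⟨m, hm⟩

theorem exists_fg_subalgebra_pow_mul_mem {A : Type*} [CommRing A] [Algebra B A] [Algebra k A]
    [IsScalarTower k B A] [IsNoetherianRing k] [IsDomain B] [Algebra.FiniteType k A]
    (hinj : Function.Injective (algebraMap B A)) :
    ∃ C : Subalgebra k B, C.FG ∧ ∃ g ∈ C, g ≠ 0 ∧ ∀ b, ∃ m : ℕ, g ^ m * b ∈ C := by
  have : Algebra.FiniteType B A := .of_restrictScalars_finiteType k B A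
  obtain ⟨L, _, _, φ, _, hBL⟩ := exists_algHom_isAlgebraic_field hinj
  let : Algebra k L := Algebra.compHom L (algebraMap k B)
  have : IsScalarTower k B L := .of_algebraMap_eq' rfl
  obtain ⟨s, hs⟩ := ‹Algebra.FiniteType k A›
  refine exists_fg_subalgebra_pow_mul_mem_of_isAlgebraic hBL (s.finite_toSet.image φ) fun b ↦ ?_
  rw [← φ.commutes, ← AlgHom.coe_restrictScalars' k, ← AlgHom.map_adjoin, hs]
  exact ⟨_, Algebra.mem_top, rfl⟩

end GenericFiniteness

section Devissage

variable {k B : Type*} [CommRing k] [CommRing B] [Algebra k B]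

theorem finiteType_quotient_iff_exists_subalgebra {I : Ideal B} :
    Algebra.FiniteType k (B ⧸ I) ↔
      ∃ D : Subalgebra k B, D.FG ∧ ∀ b, ∃ d ∈ D, b - d ∈ I := by
  have hmk := Ideal.Quotient.mkₐ_surjective k I
  refine ⟨fun ⟨s, hs⟩ ↦ ?_, fun ⟨D, hD, hDI⟩ ↦ ⟨?_⟩⟩
  · let t := Function.surjInv hmk '' s
    have ht : Ideal.Quotient.mkₐ k I '' t = s := by
      rw [Set.image_image]
      simp only [Function.surjInv_eq, Set.image_id']
    refine ⟨Algebra.adjoin k t, Subalgebra.fg_def.mpr ⟨t, s.finite_toSet.image _, rfl⟩, fun b ↦ ?_⟩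
    rw [← ht, ← AlgHom.map_adjoin] at hs
    obtain ⟨d, hd, hdb⟩ : Ideal.Quotient.mkₐ k I b ∈ (Algebra.adjoin k t).map _ :=
      hs ▸ Algebra.mem_top
    exact ⟨d, hd, Ideal.Quotient.eq.mp hdb.symm⟩
  · suffices ⊤ = D.map (Ideal.Quotient.mkₐ k I) from this ▸ hD.map _
    refine (Algebra.eq_top_iff.mpr fun x ↦ ?_).symm
    obtain ⟨b, rfl⟩ := Ideal.Quotient.mk_surjective x
    obtain ⟨d, hd, hbd⟩ := hDI b
    exact ⟨d, hd, (Ideal.Quotient.eq.mpr hbd).symm⟩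

theorem finiteType_quotient_of_mul_mem {I : Ideal B} {x y : B} (hxy : x * y ∈ I)
    (hx : Algebra.FiniteType k (B ⧸ I ⊔ Ideal.span {x}))
    (hy : Algebra.FiniteType k (B ⧸ I ⊔ Ideal.span {y})) : Algebra.FiniteType k (B ⧸ I) := by
  obtain ⟨D₁, hD₁, h₁⟩ := finiteType_quotient_iff_exists_subalgebra.mp hx
  obtain ⟨D₂, hD₂, h₂⟩ := finiteType_quotient_iff_exists_subalgebra.mp hy
  refine finiteType_quotient_iff_exists_subalgebra.mpr
    ⟨D₁ ⊔ D₂ ⊔ Algebra.adjoin k {x},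
      (hD₁.sup hD₂).sup (Subalgebra.fg_def.mpr ⟨_, Set.finite_singleton x, rfl⟩), fun b ↦ ?_⟩
  obtain ⟨d₁, hd₁, hb⟩ := h₁ b
  obtain ⟨c, i₁, hi₁, hb⟩ := Ideal.mem_span_singleton_sup.mp (sup_comm I _ ▸ hb)
  obtain ⟨d₂, hd₂, hc⟩ := h₂ c
  obtain ⟨e, i₂, hi₂, hc⟩ := Ideal.mem_span_singleton_sup.mp (sup_comm I _ ▸ hc)
  have hD₁₂ : D₁ ⊔ D₂ ≤ D₁ ⊔ D₂ ⊔ Algebra.adjoin k {x} := le_sup_left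
  have hx_mem : x ∈ D₁ ⊔ D₂ ⊔ Algebra.adjoin k {x} :=
    le_sup_right (a := D₁ ⊔ D₂) (Algebra.self_mem_adjoin_singleton k x)
  refine ⟨d₁ + d₂ * x, add_mem (hD₁₂ (le_sup_left (a := D₁) hd₁))
    (mul_mem (hD₁₂ (le_sup_right (a := D₁) hd₂)) hx_mem), ?_⟩
  have hb_sub : b - (d₁ + d₂ * x) = e * (x * y) + i₂ * x + i₁ := by
    linear_combination -hb - x * hc
  rw [hb_sub]
  exact add_mem (add_mem (I.mul_mem_left _ hxy) (I.mul_mem_right _ hi₂)) hi₁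

theorem finiteType_quotient_of_forall_isPrime [IsNoetherianRing B]
    (h : ∀ P : Ideal B, P.IsPrime → (∀ J > P, Algebra.FiniteType k (B ⧸ J)) →
      Algebra.FiniteType k (B ⧸ P)) (I : Ideal B) : Algebra.FiniteType k (B ⧸ I) := by
  induction I using IsNoetherian.induction with
  | hgt I ih =>
    by_cases hI : Ideal.IsPrime I
    · exact h I hI ih
    by_cases hI' : I = ⊤
    · have := Ideal.Quotient.subsingleton_iff.mpr hI'
      infer_instance
    obtain ⟨x, hx, y, hy, hxy⟩ := (Ideal.not_isPrime_iff.mp hI).resolve_left hI'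
    exact finiteType_quotient_of_mul_mem hxy
      (ih _ (left_lt_sup.mpr (by simpa using hx))) (ih _ (left_lt_sup.mpr (by simpa using hy)))

theorem finiteType_quotient_span_singleton {P : Ideal B}
    (h : ∀ J > P, Algebra.FiniteType k (B ⧸ J)) {g : B ⧸ P} (hg : g ≠ 0) :
    Algebra.FiniteType k ((B ⧸ P) ⧸ Ideal.span {g}) := by
  obtain ⟨b, rfl⟩ := Ideal.Quotient.mk_surjective g
  let I : Ideal (B ⧸ P) := Ideal.span {Ideal.Quotient.mk P b}
  have hlt : P < I.comap (Ideal.Quotient.mkₐ k P) := by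
    refine lt_of_le_of_ne (fun x hx ↦ ?_) fun hP ↦ hg ?_
    · simp [Ideal.mem_comap, Ideal.Quotient.eq_zero_iff_mem.mpr hx]
    · rw [Ideal.Quotient.eq_zero_iff_mem, hP]
      exact Ideal.mem_span_singleton_self _
  exact (h _ hlt).of_surjective (Ideal.quotientMapₐ I (Ideal.Quotient.mkₐ k P) le_rfl)
    (Ideal.quotientMap_surjective (H := le_rfl) (Ideal.Quotient.mkₐ_surjective k P))

end Devissage

section Retraction

variable {B A : Type*} [CommRing B] [CommRing A] [Algebra B A] {R : A →ₗ[B] B}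

theorem retraction_algebraMap (hR : R 1 = 1) (b : B) : R (algebraMap B A b) = b := by
  rw [Algebra.algebraMap_eq_smul_one, map_smul, hR, smul_eq_mul, mul_one]

theorem comap_map_eq_self_of_retraction (hR : R 1 = 1) (I : Ideal B) :
    (I.map (algebraMap B A)).comap (algebraMap B A) = I := by
  refine le_antisymm (fun b hb ↦ ?_) Ideal.le_comap_map
  have : R (algebraMap B A b) ∈ I * ⊤ :=
    map_mem_mul_of_forall_mem (I := ⊤) R (fun _ _ ↦ Submodule.mem_top) (by simpa using hb)
  rwa [retraction_algebraMap hR, Ideal.mul_top] at this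

theorem isNoetherianRing_of_retraction [IsNoetherianRing A] (hR : R 1 = 1) :
    IsNoetherianRing B := by
  have hinj : Function.Injective (Ideal.map (algebraMap B A)) :=
    Function.LeftInverse.injective (comap_map_eq_self_of_retraction hR)
  have hmono : StrictMono (Ideal.map (algebraMap B A)) :=
    Monotone.strictMono_of_injective (fun _ _ ↦ Ideal.map_mono) hinj
  have : WellFoundedGT (Ideal B) := hmono.wellFoundedGT
  exact isNoetherian_iff'.mpr this

variable {k : Type*} [CommRing k] [IsNoetherianRing k] [Algebra k B] [Algebra k A]
  [IsScalarTower k B A] [Algebra.FiniteType k A]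

theorem finiteType_of_isDomain_of_retraction [IsNoetherianRing B] [IsDomain B] (hR : R 1 = 1)
    (h : ∀ g : B, g ≠ 0 → Algebra.FiniteType k (B ⧸ Ideal.span {g})) : Algebra.FiniteType k B := by
  obtain ⟨C, hC, g, hgC, hg₀, hg⟩ := exists_fg_subalgebra_pow_mul_mem (k := k) (A := A)
    (Function.LeftInverse.injective (retraction_algebraMap hR))
  obtain ⟨D, hD, hDg⟩ := finiteType_quotient_iff_exists_subalgebra.mp (h g hg₀)
  let E : Subalgebra k B := C ⊔ D
  have hCE : C ≤ E := le_sup_left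
  let f : E := ⟨g, hCE hgC⟩
  have hf : IsTorsionDense f B := by
    refine ⟨fun b ↦ ?_, fun b ↦ ?_⟩
    · obtain ⟨m, hm⟩ := hg b
      exact ⟨m, ⟨_, hCE hm⟩, rfl⟩
    · obtain ⟨d, hd, hbd⟩ := hDg b
      obtain ⟨b', hb'⟩ := Ideal.mem_span_singleton.mp hbd
      exact ⟨⟨d, le_sup_right (a := C) hd⟩, b', sub_eq_iff_eq_add'.mp hb'⟩
  have hE : Algebra.FiniteType k E := E.fg_iff_finiteType.mp (hC.sup hD)
  have : IsNoetherianRing E := Algebra.FiniteType.isNoetherianRing k E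
  have : Algebra.FiniteType E A := .of_restrictScalars_finiteType k E A
  have hg_reg : IsSMulRegular B f := (IsRegular.of_ne_zero hg₀).left.isSMulRegular
  exact hE.trans (hf.finiteType Subtype.val_injective hg_reg hR)

theorem finiteType_of_retraction (hR : R 1 = 1) : Algebra.FiniteType k B := by
  have : IsNoetherianRing A := Algebra.FiniteType.isNoetherianRing k A
  have : IsNoetherianRing B := isNoetherianRing_of_retraction hR
  suffices Algebra.FiniteType k (B ⧸ (⊥ : Ideal B)) from
    this.equiv (AlgEquiv.quotientBot k B)
  refine finiteType_quotient_of_forall_isPrime (fun P _ hP ↦ ?_) ⊥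
  have hA' : Algebra.FiniteType k ((B ⧸ P) ⊗[B] A) :=
    .of_surjective ((Algebra.TensorProduct.includeRight (R := B) (A := B ⧸ P)).restrictScalars k)
      (Algebra.TensorProduct.includeRight_surjective _ Ideal.Quotient.mk_surjective)
  let R' : (B ⧸ P) ⊗[B] A →ₗ[B ⧸ P] B ⧸ P :=
    (TensorProduct.AlgebraTensorModule.rid B (B ⧸ P) (B ⧸ P)).toLinearMap ∘ₗ R.baseChange (B ⧸ P)
  have hR' : R' 1 = 1 := by simp [R', Algebra.TensorProduct.one_def, hR]
  exact finiteType_of_isDomain_of_retraction hR' fun g hg ↦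
    finiteType_quotient_span_singleton hP hg

end Retraction

theorem invariant_ring_finitely_generated_general {k G A : Type*} [CommRing k] [IsNoetherianRing k]
    [Monoid G] [CommRing A] [Algebra k A] [MulSemiringAction G A] [SMulCommClass G k A]
    [Algebra.FiniteType k A] (R : A →+ A) (hR_inv : ∀ (a : A) (g : G), g • R a = R a)
    (hR_one : R 1 = 1) (hR_mul : ∀ a b : A, (∀ g : G, g • a = a) → R (a * b) = a * R b) :
    ∃ s : Finset A, (∀ a ∈ s, ∀ g : G, g • a = a) ∧
      ∀ a : A, (∀ g : G, g • a = a) → a ∈ Algebra.adjoin k (↑s : Set A) := by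
  let B : Subalgebra k A := FixedPoints.subalgebra k A G
  let R' : A →ₗ[B] B :=
    { toFun := fun a ↦ ⟨R a, hR_inv a⟩
      map_add' := fun a b ↦ Subtype.ext (map_add R a b)
      map_smul' := fun b a ↦ Subtype.ext (hR_mul b a b.2) }
  obtain ⟨s, hs⟩ := B.fg_iff_finiteType.mpr
    (finiteType_of_retraction (k := k) (R := R') (Subtype.ext hR_one))
  have hsB (a : A) : a ∈ Algebra.adjoin k (s : Set A) ↔ ∀ g : G, g • a = a := by rw [hs]; rfl
  exact ⟨s, fun a ha ↦ (hsB a).mp (Algebra.subset_adjoin ha), fun a ↦ (hsB a).mpr⟩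

/-- Hilbert's finiteness theorem.  Let `G` be a complex reductive
group acting rationally on a finitely generated commutative `ℂ`-algebra `A` by
algebra automorphisms.  Then the ring of invariants `A^G` is a finitely
generated `ℂ`-algebra.  Linear reductivity of the (rational) action is encoded,
as is standard, by the existence of a Reynolds operator: a `ℂ`-linear
`G`-invariant projection `R : A → A^G` which is a map of `A^G`-modules. -/
theorem invariant_ring_finitely_generated
    (G : Type) [Group G] (A : Type) [CommRing A] [Algebra ℂ A]
    [MulSemiringAction G A] [SMulCommClass G ℂ A]
    (hfg : Algebra.FiniteType ℂ A)
    -- the Reynolds operator provided by linear reductivity of `G`: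
    (R : A →ₗ[ℂ] A)
    (hR_inv : ∀ (a : A) (g : G), g • R a = R a)
    (hR_id : ∀ a : A, (∀ g : G, g • a = a) → R a = a)
    (hR_mod : ∀ a b : A, (∀ g : G, g • a = a) → R (a * b) = a * R b) :
    ∃ s : Finset A, (∀ a ∈ s, ∀ g : G, g • a = a) ∧
      ∀ a : A, (∀ g : G, g • a = a) → a ∈ Algebra.adjoin ℂ (↑s : Set A) := by
  exact invariant_ring_finitely_generated_general R.toAddMonoidHom hR_inv
    (hR_id 1 smul_one) hR_mod
end

section
/- Let B be a finitely generated graded integral domain over C of Krull dimension r, with B_0 = C and containing a nonzero degree-1 element, and let N be a nonzero finitely generated torsion-free graded B-module. Then the function d ↦ dim_C N_d agrees for d ≫ 0 with a quasi-polynomial of degree r−1 whose leading coefficient is a (positive) constant, i.e., dim_C N_d ∼ A·d^{r−1} for some constant A > 0. -/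
open Polynomial

/-!
Let `L ≤ M` be homogeneous submodules of `N` and let `b` be homogeneous of degree `e`.
Multiplication by `b` on `M ⧸ L` has kernel `(M ⊓ b⁻¹L) ⧸ L` and cokernel `M ⧸ (L ⊔ bM)`. Both are
killed by `b` as well as by whatever kills `M ⧸ L`, so induction on the number of homogeneous
generators of `B` that act nontrivially shows that `h (d + e) - h d` is eventually quasi-polynomial
for the Hilbert function `h` of `M ⧸ L`, and hence so is `h`.

The order of growth comes from a Noether normalization `K[X₁, …, X_r] → B`: up to a linear change
of parameter and a finite factor, the elements of `N` of degree at most `d` are the images of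
polynomials of degree at most `d` in each variable, so `∑ i ≤ d, dim N_i` has exact order `d ^ r`.

Finally, multiplication by the degree-one element `x` is injective on `N`, so `dim N_d` is
monotone. Monotonicity passes the growth of the partial sums on to each residue class and squeezes
the polynomials of any two residue classes between shifts of one another, which forces their leading
coefficients to agree.
-/

open Filter Asymptotics

section QuasiPolynomial

lemma tendsto_const_add_mul_atTop {p : ℕ} (hp : 0 < p) (i : ℕ) :
    Tendsto (fun m => i + p * m) atTop atTop :=
  tendsto_atTop_mono (fun m => (Nat.le_mul_of_pos_left m hp).trans (Nat.le_add_left _ _))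
    tendsto_id

/-- `f` eventually agrees with a quasi-polynomial of period `p`. The polynomial of each residue
class `i` mod `p` is written in the variable `m`, where `d = i + p * m`; letting `i` range over all
naturals makes the notion visibly invariant under shifts of `f`. -/
def IsEventuallyQuasiPolynomial (p : ℕ) (f : ℕ → ℚ) : Prop :=
  ∀ i, ∃ P : ℚ[X], ∀ᶠ m : ℕ in atTop, f (i + p * m) = P.eval (m : ℚ)

namespace IsEventuallyQuasiPolynomial

variable {p : ℕ} {f g : ℕ → ℚ}

lemma of_eventually_eq_zero (hp : 0 < p) (hf : ∀ᶠ d in atTop, f d = 0) :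
    IsEventuallyQuasiPolynomial p f := fun i =>
  ⟨0, by simpa using (tendsto_const_add_mul_atTop hp i).eventually hf⟩

lemma sub (hf : IsEventuallyQuasiPolynomial p f) (hg : IsEventuallyQuasiPolynomial p g) :
    IsEventuallyQuasiPolynomial p (fun d => f d - g d) := fun i => by
  obtain ⟨P, hP⟩ := hf i
  obtain ⟨Q, hQ⟩ := hg i
  exact ⟨P - Q, by filter_upwards [hP, hQ] with m hPm hQm; rw [hPm, hQm, eval_sub]⟩

lemma sum {ι : Type*} {f : ι → ℕ → ℚ} (s : Finset ι)
    (hf : ∀ j ∈ s, IsEventuallyQuasiPolynomial p (f j)) :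
    IsEventuallyQuasiPolynomial p (fun d => ∑ j ∈ s, f j d) := fun i => by
  choose! P hP using fun j hj => hf j hj i
  refine ⟨∑ j ∈ s, P j, ?_⟩
  filter_upwards [(eventually_all_finset s).2 hP] with m hm
  rw [eval_finsetSum, Finset.sum_congr rfl hm]

lemma shift (hf : IsEventuallyQuasiPolynomial p f) (e : ℕ) :
    IsEventuallyQuasiPolynomial p (fun d => f (d + e)) := fun i => by
  simpa only [add_right_comm i e] using hf (i + e)

end IsEventuallyQuasiPolynomial

lemma exists_eval_add_one_eq_eval_add (P : ℚ[X]) :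
    ∃ Q : ℚ[X], ∀ x, Q.eval (x + 1) = Q.eval x + P.eval x := by
  induction P using Polynomial.induction_on' with
  | add P₁ P₂ h₁ h₂ =>
    obtain ⟨Q₁, hQ₁⟩ := h₁
    obtain ⟨Q₂, hQ₂⟩ := h₂
    exact ⟨Q₁ + Q₂, fun x => by simp only [eval_add, hQ₁, hQ₂]; ring⟩
  | monomial n a =>
    refine ⟨C (a / (n + 1)) * Polynomial.bernoulli (n + 1), fun x => ?_⟩
    have hbernoulli := Polynomial.bernoulli_eval_one_add (n + 1) x
    simp only [add_tsub_cancel_right, Nat.cast_add, Nat.cast_one] at hbernoulli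
    simp only [eval_mul, eval_C, eval_monomial, add_comm x 1, hbernoulli]
    field_simp

namespace IsEventuallyQuasiPolynomial

variable {p : ℕ} {f g : ℕ → ℚ}

lemma of_add_period_eq_add (hg : IsEventuallyQuasiPolynomial p g)
    (hfg : ∀ d, f (d + p) = f d + g d) : IsEventuallyQuasiPolynomial p f := fun i => by
  obtain ⟨P, hP⟩ := hg i
  obtain ⟨Q, hQ⟩ := exists_eval_add_one_eq_eval_add P
  have hconst : EventuallyConst (fun m : ℕ => f (i + p * m) - Q.eval (m : ℚ)) atTop := by
    obtain ⟨M, hM⟩ := eventually_atTop.1 hP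
    refine eventuallyConst_atTop_nat.2 ⟨M, fun m hm => ?_⟩
    rw [mul_add_one, ← add_assoc, hfg, hM m hm, Nat.cast_add_one, hQ]
    ring
  obtain ⟨c, hc⟩ := eventuallyConst_iff_exists_eventuallyEq.1 hconst
  refine ⟨Q + C c, ?_⟩
  filter_upwards [hc] with m hm
  rw [eval_add, eval_C, ← hm]
  ring

lemma of_add_eq_add (hg : IsEventuallyQuasiPolynomial p g) {e : ℕ} (he : e ∣ p)
    (hfg : ∀ d, f (d + e) = f d + g d) : IsEventuallyQuasiPolynomial p f := by
  obtain ⟨k, rfl⟩ := he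
  have htelescope : ∀ n d, f (d + e * n) = f d + ∑ j ∈ Finset.range n, g (d + e * j) := by
    intro n d
    induction n with
    | zero => simp
    | succ n ih => rw [mul_add_one, ← add_assoc, hfg, ih, Finset.sum_range_succ, add_assoc]
  exact (sum (Finset.range k) fun j _ => hg.shift (e * j)).of_add_period_eq_add (htelescope k)

end IsEventuallyQuasiPolynomial

end QuasiPolynomial

section Growth

lemma isBigO_of_nonneg_of_eventually_le_mul {α : Type*} {l : Filter α} {f g : α → ℚ} (c : ℚ)
    (hnonneg : ∀ a, 0 ≤ f a) (hle : ∀ᶠ a in l, f a ≤ c * g a) : f =O[l] g := by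
  refine .of_bound ‖c‖ (hle.mono fun a ha => ?_)
  rw [← norm_mul, ← Rat.norm_cast_real, ← Rat.norm_cast_real]
  refine abs_le_abs_of_nonneg ?_ ?_
  · exact_mod_cast hnonneg a
  · exact_mod_cast ha

variable {f : ℕ → ℚ} {r : ℕ}

lemma mul_le_sum_range_two_mul (hmono : Monotone f) (hnonneg : ∀ d, 0 ≤ f d) (d : ℕ) :
    d * f d ≤ ∑ i ∈ Finset.range (2 * d), f i := by
  calc d * f d ≤ ∑ i ∈ Finset.range d, f (d + i) := by
        simpa using Finset.card_nsmul_le_sum (Finset.range d) (fun i => f (d + i)) (f d)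
          fun i _ => hmono (Nat.le_add_right _ _)
    _ ≤ ∑ i ∈ Finset.range (2 * d), f i := by
        rw [two_mul, Finset.sum_range_add]
        exact le_add_of_nonneg_left (Finset.sum_nonneg fun i _ => hnonneg i)

lemma isTheta_mul_of_isTheta_sum_range (hmono : Monotone f) (hnonneg : ∀ d, 0 ≤ f d)
    (hsum : (fun d => ∑ i ∈ Finset.range (d + 1), f i) =Θ[atTop] fun d => (d : ℚ) ^ r) :
    (fun d => d * f d) =Θ[atTop] fun d => (d : ℚ) ^ r := by
  constructor
  · have htwo : Tendsto (fun d : ℕ => 2 * d) atTop atTop := tendsto_id.const_mul_atTop' two_pos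
    calc (fun d : ℕ => d * f d)
        =O[atTop] fun d => ∑ i ∈ Finset.range (2 * d + 1), f i := by
          refine isBigO_of_nonneg_of_eventually_le_mul 1
            (fun d => mul_nonneg d.cast_nonneg (hnonneg d)) (.of_forall fun d => ?_)
          rw [one_mul, Finset.sum_range_succ]
          exact (mul_le_sum_range_two_mul hmono hnonneg d).trans
            (le_add_of_nonneg_right (hnonneg _))
      _ =O[atTop] fun d : ℕ => ((2 * d : ℕ) : ℚ) ^ r := hsum.1.comp_tendsto htwo
      _ =O[atTop] fun d : ℕ => (d : ℚ) ^ r := by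
          simp only [Nat.cast_mul, mul_pow]
          exact (isBigO_refl _ _).const_mul_left _
  · refine hsum.2.trans (isBigO_of_nonneg_of_eventually_le_mul 2
      (fun d => Finset.sum_nonneg fun i _ => hnonneg i) ?_)
    filter_upwards [eventually_ge_atTop 1] with d hd
    have hd' : (1 : ℚ) ≤ d := by exact_mod_cast hd
    calc ∑ i ∈ Finset.range (d + 1), f i ≤ (d + 1) * f d := by
          simpa using Finset.sum_le_card_nsmul (Finset.range (d + 1)) f (f d)
            fun i hi => hmono (Finset.mem_range_succ_iff.1 hi)
      _ ≤ 2 * (d * f d) := by nlinarith [hnonneg d]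

lemma isBigO_pow_of_forall_le_mul_pow (hnonneg : ∀ d, 0 ≤ f d) (D c C : ℕ)
    (hle : ∀ d : ℕ, f d ≤ ((D : ℚ) * d + c + 1) ^ r * C) :
    f =O[atTop] fun d : ℕ => (d : ℚ) ^ r := by
  refine isBigO_of_nonneg_of_eventually_le_mul (((D : ℚ) + c + 1) ^ r * C) hnonneg ?_
  filter_upwards [eventually_ge_atTop 1] with d hd
  have hd' : (1 : ℚ) ≤ d := by exact_mod_cast hd
  calc f d ≤ ((D : ℚ) * d + c + 1) ^ r * C := hle d
    _ ≤ ((D : ℚ) * d + c * d + d) ^ r * C := by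
        gcongr
        exact le_mul_of_one_le_right c.cast_nonneg hd'
    _ = ((D : ℚ) + c + 1) ^ r * C * d ^ r := by
        rw [← add_mul, ← add_one_mul, mul_pow, mul_right_comm]

lemma pow_isBigO_of_monotone_of_forall_pow_le (hmono : Monotone f) (E a : ℕ)
    (hle : ∀ j : ℕ, ((j : ℚ) + 1) ^ r ≤ f (E * j + a)) :
    (fun d : ℕ => (d : ℚ) ^ r) =O[atTop] f := by
  set k := E + a + 1
  refine isBigO_of_nonneg_of_eventually_le_mul ((k : ℚ) ^ r) (fun d => by positivity) ?_
  filter_upwards [eventually_ge_atTop k] with d hd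
  have hdiv_pos : 1 ≤ d / k := (Nat.one_le_div_iff (Nat.succ_pos _)).2 hd
  have hindex : E * (d / k) + a ≤ d := by
    refine le_trans ?_ (Nat.mul_div_le d k)
    calc E * (d / k) + a ≤ E * (d / k) + a * (d / k) := by
          gcongr
          exact Nat.le_mul_of_pos_right a hdiv_pos
      _ ≤ k * (d / k) := by rw [← add_mul]; gcongr; exact Nat.le_succ _
  have hlt : (d : ℚ) ≤ k * (((d / k : ℕ) : ℚ) + 1) := by
    exact_mod_cast (Nat.lt_mul_div_succ d (Nat.succ_pos _)).le
  calc (d : ℚ) ^ r ≤ (k * (((d / k : ℕ) : ℚ) + 1)) ^ r := by gcongr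
    _ = k ^ r * (((d / k : ℕ) : ℚ) + 1) ^ r := mul_pow _ _ _
    _ ≤ k ^ r * f d := by gcongr; exact (hle _).trans (hmono hindex)

lemma degree_eq_of_eval_isTheta_pow {P : ℚ[X]}
    (hP : (fun m : ℕ => P.eval (m : ℚ)) =Θ[atTop] fun m => (m : ℚ) ^ r) :
    P.degree = r := by
  have hcast : Tendsto (fun m : ℕ => (m : ℚ)) atTop atTop := tendsto_natCast_atTop_atTop
  have hpow : ∃ᶠ m : ℕ in atTop, ((m : ℚ)) ^ r ≠ 0 :=
    ((eventually_gt_atTop 0).mono fun m hm => by positivity).frequently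
  have hirrefl := isLittleO_irrefl (l := atTop) hpow
  rw [← degree_X_pow (R := ℚ) r]
  rcases lt_trichotomy P.degree (X ^ r : ℚ[X]).degree with hlt | heq | hgt
  · have hlittle := (isLittleO_atTop_of_degree_lt _ _ hlt).comp_tendsto hcast
    simp only [Function.comp_def, eval_pow, eval_X] at hlittle
    exact absurd (hP.2.trans_isLittleO hlittle) hirrefl
  · exact heq
  · have hlittle := (isLittleO_atTop_of_degree_lt _ _ hgt).comp_tendsto hcast
    simp only [Function.comp_def, eval_pow, eval_X] at hlittle
    exact absurd (hlittle.trans_isBigO hP.1) hirrefl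

lemma leadingCoeff_le_of_eventually_eval_le {P Q : ℚ[X]} (hdeg : P.degree = Q.degree)
    (hle : ∀ᶠ m : ℕ in atTop, P.eval (m : ℚ) ≤ Q.eval (m : ℚ)) :
    P.leadingCoeff ≤ Q.leadingCoeff := by
  rcases eq_or_ne Q 0 with rfl | hQ
  · rw [degree_eq_bot.1 hdeg]
  have hlim (R : ℚ[X]) (hR : R.degree = Q.degree) :
      Tendsto (fun m : ℕ => R.eval (m : ℚ) / (m : ℚ) ^ Q.natDegree) atTop
        (nhds R.leadingCoeff) := by
    simpa [Function.comp_def] using (div_tendsto_atTop_leadingCoeff_div_of_degree_eq R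
      (X ^ Q.natDegree) (by rw [hR, degree_X_pow, degree_eq_natDegree hQ])).comp
        (tendsto_natCast_atTop_atTop (R := ℚ))
  refine le_of_tendsto_of_tendsto (hlim P hdeg) (hlim Q rfl) (hle.mono fun m hm => ?_)
  dsimp only
  gcongr

end Growth

section LeadingCoefficient

variable {f : ℕ → ℚ} {p r : ℕ}

lemma isTheta_natCast_const_add_mul (hp : 0 < p) (i : ℕ) :
    (fun m : ℕ => ((i + p * m : ℕ) : ℚ)) =Θ[atTop] fun m => (m : ℚ) := by
  constructor
  · refine isBigO_of_nonneg_of_eventually_le_mul (i + p) (fun m => Nat.cast_nonneg _) ?_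
    filter_upwards [eventually_ge_atTop 1] with m hm
    exact_mod_cast (show i + p * m ≤ (i + p) * m by nlinarith)
  · refine isBigO_of_nonneg_of_eventually_le_mul 1 (fun m => Nat.cast_nonneg _)
      (.of_forall fun m => ?_)
    rw [one_mul]
    exact_mod_cast (show m ≤ i + p * m by nlinarith)

lemma degree_X_mul_eq_of_isTheta_sum_range (hp : 0 < p) (hmono : Monotone f)
    (hnonneg : ∀ d, 0 ≤ f d)
    (hsum : (fun d => ∑ i ∈ Finset.range (d + 1), f i) =Θ[atTop] fun d => (d : ℚ) ^ r)
    {i : ℕ} {P : ℚ[X]} (hP : ∀ᶠ m : ℕ in atTop, f (i + p * m) = P.eval (m : ℚ)) :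
    (X * P : ℚ[X]).degree = r := by
  have hu := tendsto_const_add_mul_atTop hp i
  have hcast := isTheta_natCast_const_add_mul hp i
  have hmul := isTheta_mul_of_isTheta_sum_range hmono hnonneg hsum
  apply degree_eq_of_eval_isTheta_pow
  calc (fun m : ℕ => (X * P).eval (m : ℚ))
      =ᶠ[atTop] fun m : ℕ => m * f (i + p * m) := by
        filter_upwards [hP] with m hm
        rw [eval_mul, eval_X, hm]
    _ =Θ[atTop] fun m : ℕ => ((i + p * m : ℕ) : ℚ) * f (i + p * m) :=
        hcast.symm.mul (isTheta_refl _ _)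
    _ =Θ[atTop] fun m : ℕ => ((i + p * m : ℕ) : ℚ) ^ r :=
        ⟨hmul.1.comp_tendsto hu, hmul.2.comp_tendsto hu⟩
    _ =Θ[atTop] fun m : ℕ => (m : ℚ) ^ r := hcast.pow r

lemma natDegree_eq_sub_one_of_degree_X_mul_eq {P : ℚ[X]} (hP : (X * P : ℚ[X]).degree = r) :
    P ≠ 0 ∧ P.natDegree = r - 1 := by
  have hP0 : P ≠ 0 := by rintro rfl; simp at hP
  refine ⟨hP0, ?_⟩
  have hnat := natDegree_eq_of_degree_eq_some hP
  rw [natDegree_X_mul hP0] at hnat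
  omega

lemma leadingCoeff_pos_of_eventually_eval_nonneg {P : ℚ[X]} (hP : P ≠ 0)
    (hnonneg : ∀ᶠ m : ℕ in atTop, 0 ≤ P.eval (m : ℚ)) : 0 < P.leadingCoeff := by
  have hneg : (-P).leadingCoeff ≤ P.leadingCoeff :=
    leadingCoeff_le_of_eventually_eval_le P.degree_neg
      (hnonneg.mono fun m hm => by rw [eval_neg]; linarith)
  rw [leadingCoeff_neg] at hneg
  exact lt_of_le_of_ne (by linarith) (leadingCoeff_ne_zero.2 hP).symm

lemma leadingCoeff_le_of_monotone (hmono : Monotone f) {i j : ℕ} (hij : i ≤ j + p)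
    {P Q : ℚ[X]} (hdeg : P.degree = Q.degree)
    (hP : ∀ᶠ m : ℕ in atTop, f (i + p * m) = P.eval (m : ℚ))
    (hQ : ∀ᶠ m : ℕ in atTop, f (j + p * m) = Q.eval (m : ℚ)) :
    P.leadingCoeff ≤ Q.leadingCoeff := by
  rw [← leadingCoeff_taylor 1 Q]
  refine leadingCoeff_le_of_eventually_eval_le (by rw [degree_taylor, hdeg]) ?_
  filter_upwards [hP, (tendsto_add_atTop_nat 1).eventually hQ] with m hPm hQm
  rw [taylor_eval, ← Nat.cast_add_one, ← hPm, ← hQm]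
  exact hmono (by linarith)

lemma comp_residue_eval (hp : 0 < p) (P : ℚ[X]) (d : ℕ) :
    (P.comp (C (p : ℚ)⁻¹ * X + C (-(p : ℚ)⁻¹ * (d % p : ℕ)))).eval (d : ℚ) =
      P.eval ((d / p : ℕ) : ℚ) := by
  have hdiv : (d : ℚ) = (d % p : ℕ) + p * (d / p : ℕ) := by
    exact_mod_cast (Nat.mod_add_div d p).symm
  have hp' : (p : ℚ) ≠ 0 := by exact_mod_cast hp.ne'
  simp only [eval_comp, eval_add, eval_mul, eval_C, eval_X]
  congr 1
  rw [hdiv]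
  field_simp
  ring

theorem exists_quasiPolynomial_of_monotone_of_isTheta_sum_range (hp : 0 < p)
    (hf : IsEventuallyQuasiPolynomial p f) (hmono : Monotone f) (hnonneg : ∀ d, 0 ≤ f d)
    (hsum : (fun d => ∑ i ∈ Finset.range (d + 1), f i) =Θ[atTop] fun d => (d : ℚ) ^ r) :
    ∃ (q : ℕ → ℚ[X]) (A : ℚ), 0 < A ∧
      (∀ i < p, (q i).natDegree = r - 1 ∧ (q i).leadingCoeff = A) ∧
      ∃ D, ∀ d ≥ D, f d = (q (d % p)).eval (d : ℚ) := by
  choose P hP using hf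
  have hXP (i) := degree_X_mul_eq_of_isTheta_sum_range hp hmono hnonneg hsum (hP i)
  have hdeg (i) := natDegree_eq_sub_one_of_degree_X_mul_eq (hXP i)
  have hdeg_eq (i j) : (P i).degree = (P j).degree := by
    rw [degree_eq_natDegree (hdeg i).1, degree_eq_natDegree (hdeg j).1, (hdeg i).2, (hdeg j).2]
  have hlead_pos : 0 < (P 0).leadingCoeff :=
    leadingCoeff_pos_of_eventually_eval_nonneg (hdeg 0).1 ((hP 0).mono fun m hm => hm ▸ hnonneg _)
  have hlead {i} (hi : i < p) : (P i).leadingCoeff = (P 0).leadingCoeff :=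
    le_antisymm (leadingCoeff_le_of_monotone hmono (by omega) (hdeg_eq i 0) (hP i) (hP 0))
      (leadingCoeff_le_of_monotone hmono (by omega) (hdeg_eq 0 i) (hP 0) (hP i))
  have hp_inv : (p : ℚ)⁻¹ ≠ 0 := by positivity
  refine ⟨fun i => (P i).comp (C (p : ℚ)⁻¹ * X + C (-(p : ℚ)⁻¹ * i)),
    (P 0).leadingCoeff * (p : ℚ)⁻¹ ^ (r - 1), by positivity, fun i hi => ⟨?_, ?_⟩, ?_⟩
  · rw [natDegree_comp, natDegree_linear hp_inv, mul_one, (hdeg i).2]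
  · rw [leadingCoeff_comp (by rw [natDegree_linear hp_inv]; exact one_ne_zero),
      leadingCoeff_linear hp_inv, (hdeg i).2, hlead hi]
  · have hall := (eventually_all_finset (Finset.range p)).2 fun i _ => hP i
    obtain ⟨D, hD⟩ := eventually_atTop.1
      ((Nat.tendsto_div_const_atTop hp.ne').eventually hall)
    refine ⟨D, fun d hd => ?_⟩
    rw [comp_residue_eval hp, ← hD d hd _ (Finset.mem_range.2 (Nat.mod_lt d hp)),
      Nat.mod_add_div]

end LeadingCoefficient

section NoetherNormalization

theorem ringKrullDim_eq_of_isIntegral_of_injective {R S : Type*} [CommRing R] [CommRing S]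
    [Algebra R S] [Algebra.IsIntegral R S] (hinj : Function.Injective (algebraMap R S)) :
    ringKrullDim R = ringKrullDim S := by
  refine le_antisymm (iSup_le fun chain => ?_)
    (Order.krullDim_le_of_strictMono (PrimeSpectrum.comap (algebraMap R S))
      fun I J hIJ => Ideal.IsIntegral.comap_lt_comap (R := R) hIJ)
  obtain ⟨Q, -, _, hQ⟩ := Ideal.exists_ideal_over_prime_of_isIntegral
    chain.head.asIdeal (⊥ : Ideal S) (by
      rw [← RingHom.ker_eq_comap_bot, (RingHom.injective_iff_ker_eq_bot _).1 hinj]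
      exact bot_le)
  have : Q.LiesOver chain.head.asIdeal := ⟨hQ.symm⟩
  obtain ⟨lift, hlength, -, -⟩ := Ideal.exists_ltSeries_of_hasGoingUp chain Q
  rw [← hlength]
  exact le_iSup (fun l : LTSeries (PrimeSpectrum S) => (l.length : WithBot ℕ∞)) lift

theorem exists_finite_injective_algHom_of_ringKrullDim_eq (K : Type*) {B : Type*} [Field K]
    [CommRing B] [Nontrivial B] [Algebra K B] [Algebra.FiniteType K B] {r : ℕ}
    (hr : ringKrullDim B = r) :
    ∃ g : MvPolynomial (Fin r) K →ₐ[K] B, Function.Injective g ∧ g.Finite := by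
  obtain ⟨s, g, hinj, hfin⟩ := exists_finite_inj_algHom_of_fg K B
  algebraize [g.toRingHom]
  have : Module.Finite (MvPolynomial (Fin s) K) B := hfin
  have hdim : ((s : ℕ) : WithBot ℕ∞) = r := by
    rw [← hr, ← ringKrullDim_eq_of_isIntegral_of_injective (R := MvPolynomial (Fin s) K) hinj,
      MvPolynomial.ringKrullDim_of_isNoetherianRing, ringKrullDim_eq_zero_of_field]
    simp
  obtain rfl : s = r := by exact_mod_cast hdim
  exact ⟨g, hinj, hfin⟩

end NoetherNormalization

section RestrictDegree

open MvPolynomial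
open scoped Pointwise

variable (σ R : Type*) [CommSemiring R]

lemma restrictDegree_mul (a b : ℕ) :
    restrictDegree σ R a * restrictDegree σ R b = restrictDegree σ R (a + b) := by
  have hsupport : {n : σ →₀ ℕ | ∀ i, n i ≤ a} + {n | ∀ i, n i ≤ b} = {n | ∀ i, n i ≤ a + b} := by
    refine Set.Subset.antisymm ?_ fun n hn => ?_
    · rintro _ ⟨m, hm, n, hn, rfl⟩ i
      exact add_le_add (hm i) (hn i)
    · refine ⟨n.mapRange (min a) (min_eq_right a.zero_le), fun i => min_le_left _ _,
        n.mapRange (· - a) (Nat.zero_sub a), fun i => Nat.sub_le_iff_le_add'.2 (hn i), ?_⟩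
      ext i
      simp only [Finsupp.add_apply, Finsupp.mapRange_apply]
      omega
  simp only [restrictDegree, ← restrictSupport_add, hsupport]

lemma restrictDegree_one_pow (j : ℕ) : restrictDegree σ R 1 ^ j = restrictDegree σ R j := by
  induction j with
  | zero =>
    have hsupport : {n : σ →₀ ℕ | ∀ i, n i ≤ 0} = 0 := by
      ext n
      simp [Finsupp.ext_iff]
    rw [pow_zero, restrictDegree, hsupport, restrictSupport_zero]
  | succ j ih => rw [pow_succ, ih, restrictDegree_mul]

lemma finrank_restrictDegree [Nontrivial R] [Fintype σ] (j : ℕ) :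
    Module.finrank R (restrictDegree σ R j) = (j + 1) ^ Fintype.card σ := by
  classical
  let exponentEquiv : {n : σ →₀ ℕ | ∀ i, n i ≤ j} ≃ (σ → Fin (j + 1)) :=
    { toFun := fun n i => ⟨n.1 i, Nat.lt_succ_of_le (n.2 i)⟩
      invFun := fun v => ⟨Finsupp.equivFunOnFinite.symm fun i => v i, fun i => by
        simpa using (v i).is_le⟩
      left_inv := fun n => by ext; simp
      right_inv := fun v => by ext; simp }
  rw [restrictDegree, Module.finrank_eq_nat_card_basis (basisRestrictSupport R _),
    Nat.card_congr exponentEquiv]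
  simp

lemma exists_mem_restrictDegree {σ R : Type*} [CommSemiring R] (P : MvPolynomial σ R) :
    ∃ j, P ∈ restrictDegree σ R j :=
  ⟨P.totalDegree, restrictTotalDegree_le_restrictDegree _ _ _
    ((mem_restrictTotalDegree _ _ _).2 le_rfl)⟩

end RestrictDegree

section LinearAlgebra

open Submodule

lemma finrank_map_add_finrank_inf_ker {K V W : Type*} [Field K] [AddCommGroup V] [Module K V]
    [AddCommGroup W] [Module K W] (f : V →ₗ[K] W) (S : Submodule K V) [FiniteDimensional K S] :
    Module.finrank K (S.map f) + Module.finrank K ↥(S ⊓ LinearMap.ker f) = Module.finrank K S := by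
  rw [← LinearMap.finrank_range_add_finrank_ker (f.domRestrict S), LinearMap.range_domRestrict,
    LinearMap.ker_domRestrict, ← map_comap_subtype,
    (equivMapOfInjective _ S.injective_subtype _).finrank_eq]

lemma finrank_add_finrank_eq_inf_comap_add_sup_map {K V W : Type*} [Field K] [AddCommGroup V]
    [Module K V] [AddCommGroup W] [Module K W] (f : V →ₗ[K] W) (S : Submodule K V)
    (T : Submodule K W) [FiniteDimensional K S] [FiniteDimensional K T] :
    Module.finrank K S + Module.finrank K T =
      Module.finrank K ↥(S ⊓ T.comap f) + Module.finrank K ↥(T ⊔ S.map f) := by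
  have hS := finrank_map_add_finrank_inf_ker f S
  have hinf := finrank_map_add_finrank_inf_ker f (S ⊓ T.comap f)
  have hsup := finrank_sup_add_finrank_inf_eq T (S.map f)
  have hmap : (S ⊓ T.comap f).map f = T ⊓ S.map f :=
    SetLike.coe_injective ((Set.image_inter_preimage f S T).trans (Set.inter_comm _ _))
  have hker : S ⊓ T.comap f ⊓ LinearMap.ker f = S ⊓ LinearMap.ker f := by
    rw [inf_assoc, inf_eq_right.2 (LinearMap.ker_le_comap f)]
  rw [hmap, hker] at hinf
  omega

lemma finrank_finsetSup_of_supIndep {K V ι : Type*} [Field K] [AddCommGroup V] [Module K V]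
    {F : ι → Submodule K V} [∀ i, FiniteDimensional K (F i)] {s : Finset ι} (hs : s.SupIndep F) :
    Module.finrank K ↥(s.sup F) = ∑ i ∈ s, Module.finrank K (F i) := by
  classical
  induction s using Finset.induction_on with
  | empty => simp
  | insert i s hi ih =>
    have hdisjoint : Disjoint (F i) (s.sup F) :=
      hs (Finset.subset_insert i s) (Finset.mem_insert_self i s) hi
    rw [Finset.sup_insert, Finset.sum_insert hi, ← ih (hs.subset (Finset.subset_insert i s)),
      ← finrank_sup_add_finrank_inf_eq, hdisjoint.eq_bot, finrank_bot, add_zero]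

lemma exists_le_of_fg_of_monotone {R M : Type*} [Semiring R] [AddCommMonoid M] [Module R M]
    {F : ℕ → Submodule R M} (hF : Monotone F) (hexhaust : ∀ m, ∃ j, m ∈ F j) {T : Submodule R M}
    (hT : T.FG) : ∃ j, T ≤ F j := by
  obtain ⟨s, rfl⟩ := hT
  choose level hlevel using hexhaust
  exact ⟨s.sup level, span_le.2 fun m hm => hF (Finset.le_sup hm) (hlevel m)⟩

variable {K B N : Type*} [Field K] [CommRing B] [Algebra K B] [AddCommGroup N] [Module K N]
  [Module B N] [IsScalarTower K B N]

lemma smul_eq_range_lift_lsmul (I : Submodule K B) (T : Submodule K N) :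
    I • T = LinearMap.range (TensorProduct.lift
      ((Algebra.lsmul K K N).toLinearMap.compl₁₂ I.subtype T.subtype)) := by
  refine le_antisymm (smul_le.2 fun b hb n hn => ⟨⟨b, hb⟩ ⊗ₜ[K] ⟨n, hn⟩, by simp⟩) ?_
  rw [LinearMap.range_le_iff_comap, ← top_le_iff, ← TensorProduct.span_tmul_eq_top, span_le]
  rintro _ ⟨b, n, rfl⟩
  simpa using smul_mem_smul b.2 n.2

instance finiteDimensional_smul (I : Submodule K B) (T : Submodule K N) [FiniteDimensional K I]
    [FiniteDimensional K T] : FiniteDimensional K ↥(I • T) := by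
  rw [smul_eq_range_lift_lsmul]
  infer_instance

lemma finrank_smul_le (I : Submodule K B) (T : Submodule K N) [FiniteDimensional K I]
    [FiniteDimensional K T] :
    Module.finrank K ↥(I • T) ≤ Module.finrank K I * Module.finrank K T := by
  rw [smul_eq_range_lift_lsmul, ← Module.finrank_tensorProduct]
  exact LinearMap.finrank_range_le _

end LinearAlgebra

section GradedModule

open DirectSum

section Decompose

variable {A M σ τ : Type*} [Semiring A] [AddCommMonoid M] [Module A M] [SetLike σ A]
  [SetLike τ M] [AddSubmonoidClass τ M] {𝒜 : ℕ → σ} (ℳ : ℕ → τ) [Decomposition ℳ]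
  [SetLike.GradedSMul 𝒜 ℳ]

lemma decompose_smul_add_of_mem {a : A} {e : ℕ} (ha : a ∈ 𝒜 e) (m : M) (d : ℕ) :
    (decompose ℳ (a • m) (d + e) : M) = a • (decompose ℳ m d : M) := by
  induction m using Decomposition.inductionOn ℳ with
  | zero => simp
  | @homogeneous i m =>
    have hmem : a • (m : M) ∈ ℳ (i + e) := by
      simpa only [vadd_eq_add, add_comm e i] using SetLike.GradedSMul.smul_mem ha m.2
    obtain rfl | hid := eq_or_ne i d
    · rw [decompose_of_mem_same ℳ hmem, decompose_of_mem_same ℳ m.2]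
    · rw [decompose_of_mem_ne ℳ hmem (by omega), decompose_of_mem_ne ℳ m.2 hid, smul_zero]
  | add m m' hm hm' =>
    simp only [smul_add, decompose_add, DirectSum.add_apply, AddMemClass.coe_add, hm, hm']

lemma decompose_smul_eq_zero_of_mem_of_lt {a : A} {e d : ℕ} (ha : a ∈ 𝒜 e) (hd : d < e) (m : M) :
    (decompose ℳ (a • m) d : M) = 0 := by
  induction m using Decomposition.inductionOn ℳ with
  | zero => simp
  | @homogeneous i m =>
    have hmem : a • (m : M) ∈ ℳ (e + i) := SetLike.GradedSMul.smul_mem ha m.2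
    rw [decompose_of_mem_ne ℳ hmem (by omega)]
  | add m m' hm hm' =>
    simp only [smul_add, decompose_add, DirectSum.add_apply, AddMemClass.coe_add, hm, hm', add_zero]

end Decompose

lemma forall_mem_span_of_adjoin_eq_top {R A M : Type*} [CommSemiring R] [Semiring A] [Algebra R A]
    [AddCommMonoid M] [Module A M] {s : Set A} (hs : Algebra.adjoin R s = ⊤) {W : AddSubmonoid M}
    (hR : ∀ c : R, ∀ m ∈ W, algebraMap R A c • m ∈ W) (hsW : ∀ a ∈ s, ∀ m ∈ W, a • m ∈ W)
    {G : Set M} (hG : G ⊆ W) : ∀ m ∈ Submodule.span A G, m ∈ W := by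
  have hA : ∀ a : A, ∀ m ∈ W, a • m ∈ W := fun a => by
    induction (hs ▸ Algebra.mem_top : a ∈ Algebra.adjoin R s) using Algebra.adjoin_induction with
    | mem a ha => exact hsW a ha
    | algebraMap c => exact hR c
    | add a a' _ _ ha ha' => exact fun m hm => add_smul a a' m ▸ add_mem (ha m hm) (ha' m hm)
    | mul a a' _ _ ha ha' => exact fun m hm => mul_smul a a' m ▸ ha _ (ha' m hm)
  intro m hm
  induction hm using Submodule.span_induction with
  | mem m hm => exact hG hm
  | zero => exact zero_mem W
  | add m m' _ _ hm hm' => exact add_mem hm hm'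
  | smul a m _ hm => exact hA a m hm

lemma exists_finset_adjoin_eq_top_of_finiteType {K B : Type*} [Field K] [CommRing B] [Algebra K B]
    [Algebra.FiniteType K B] (ℬ : ℕ → Submodule K B) [GradedAlgebra ℬ] :
    ∃ s : Finset B, Algebra.adjoin (ℬ 0) (s : Set B) = ⊤ ∧ ∀ b ∈ s, ∃ e ≠ 0, b ∈ ℬ e := by
  have : IsScalarTower K (ℬ 0) B := ⟨fun a c b => smul_mul_assoc a (c : B) b⟩
  have : Algebra.FiniteType (ℬ 0) B := .of_restrictScalars_finiteType K (ℬ 0) B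
  exact GradedAlgebra.exists_finset_adjoin_eq_top_and_homogeneous_ne_zero ℬ

end GradedModule

section DegreeFiltration

variable {R M : Type*} [CommSemiring R] [AddCommMonoid M] [Module R M] (ℳ : ℕ → Submodule R M)

/-- The submodule of elements all of whose components have degree at most `d`: the filtration
of a graded module that turns its graded pieces into consecutive quotients. -/
def degreeFiltration (d : ℕ) : Submodule R M := (Finset.range (d + 1)).sup ℳ

variable {ℳ}

lemma degreeFiltration_le_iff {d : ℕ} {W : Submodule R M} :
    degreeFiltration ℳ d ≤ W ↔ ∀ i ≤ d, ℳ i ≤ W := by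
  simp [degreeFiltration]

lemma le_degreeFiltration {i d : ℕ} (hid : i ≤ d) : ℳ i ≤ degreeFiltration ℳ d :=
  degreeFiltration_le_iff.1 le_rfl i hid

lemma degreeFiltration_mono : Monotone (degreeFiltration ℳ) := fun _ _ hde =>
  degreeFiltration_le_iff.2 fun _ hi => le_degreeFiltration (hi.trans hde)

lemma exists_mem_degreeFiltration [DirectSum.Decomposition ℳ] (m : M) :
    ∃ d, m ∈ degreeFiltration ℳ d := by
  classical
  have hsum := DirectSum.sum_support_decompose ℳ m
  set s := (DirectSum.decompose ℳ m).support
  refine ⟨s.sup id, hsum ▸ sum_mem fun i hi => ?_⟩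
  exact le_degreeFiltration (Finset.le_sup (f := id) hi) (DirectSum.decompose ℳ m i).2

lemma decompose_eq_zero_of_mem_degreeFiltration [DirectSum.Decomposition ℳ] {d i : ℕ}
    (hdi : d < i) {m : M} (hm : m ∈ degreeFiltration ℳ d) : DirectSum.decompose ℳ m i = 0 := by
  let component : M →ₗ[R] ℳ i := (DirectSum.component R ℕ (fun j => ℳ j) i).comp
    (DirectSum.decomposeLinearEquiv ℳ).toLinearMap
  have hker : degreeFiltration ℳ d ≤ LinearMap.ker component :=
    degreeFiltration_le_iff.2 fun j hj m hm =>
      Subtype.ext (DirectSum.decompose_of_mem_ne ℳ hm (hj.trans_lt hdi).ne)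
  exact hker hm

lemma smul_mem_degreeFiltration {A : Type*} [CommSemiring A] [Algebra R A] [Module A M]
    [IsScalarTower R A M] {𝒜 : ℕ → Submodule R A} [SetLike.GradedSMul 𝒜 ℳ] {a b : ℕ} {x : A}
    {m : M} (hx : x ∈ degreeFiltration 𝒜 a) (hm : m ∈ degreeFiltration ℳ b) :
    x • m ∈ degreeFiltration ℳ (a + b) := by
  have hpieces : degreeFiltration 𝒜 a • degreeFiltration ℳ b ≤ degreeFiltration ℳ (a + b) := by
    rw [degreeFiltration, degreeFiltration]
    simp only [Finset.sup_eq_iSup, Submodule.iSup_smul, Submodule.smul_iSup, iSup_le_iff,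
      Finset.mem_range, Nat.lt_succ_iff]
    intro j hj i hi
    refine Submodule.smul_le.2 fun x hx m hm => ?_
    exact le_degreeFiltration (add_le_add hi hj) (SetLike.GradedSMul.smul_mem hx hm)
  exact hpieces (Submodule.smul_mem_smul hx hm)

instance finiteDimensional_degreeFiltration {K V : Type*} [Field K] [AddCommGroup V] [Module K V]
    (𝒱 : ℕ → Submodule K V) [∀ i, FiniteDimensional K (𝒱 i)] (d : ℕ) :
    FiniteDimensional K (degreeFiltration 𝒱 d) :=
  Submodule.finiteDimensional_finset_sup _ 𝒱

lemma finrank_degreeFiltration {K V : Type*} [Field K] [AddCommGroup V] [Module K V]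
    (𝒱 : ℕ → Submodule K V) [DirectSum.Decomposition 𝒱] [∀ i, FiniteDimensional K (𝒱 i)] (d : ℕ) :
    Module.finrank K (degreeFiltration 𝒱 d) = ∑ i ∈ Finset.range (d + 1), Module.finrank K (𝒱 i) :=
  finrank_finsetSup_of_supIndep
    ((DirectSum.Decomposition.isInternal 𝒱).submodule_iSupIndep.supIndep' _)

end DegreeFiltration

section HilbertFunction

open DirectSum

variable {K B N : Type*} [Field K] [CommRing B] [Algebra K B] [AddCommGroup N] [Module K N]
  [Module B N] {𝒩 : ℕ → Submodule K N}

section Homogeneous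

variable [Decomposition 𝒩] {L M : Submodule B N}

lemma isHomogeneous_inf_comap_lsmul {ℬ : ℕ → Submodule K B} [SetLike.GradedSMul ℬ 𝒩]
    (hM : M.IsHomogeneous 𝒩) (hL : L.IsHomogeneous 𝒩) {b : B} {e : ℕ} (hb : b ∈ ℬ e) :
    (M ⊓ L.comap (LinearMap.lsmul B N b)).IsHomogeneous 𝒩 := fun d m hm => by
  refine ⟨hM d hm.1, ?_⟩
  rw [SetLike.mem_coe, Submodule.mem_comap, LinearMap.lsmul_apply,
    ← decompose_smul_add_of_mem 𝒩 hb]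
  exact hL _ hm.2

lemma isHomogeneous_sup_map_lsmul {ℬ : ℕ → Submodule K B} [SetLike.GradedSMul ℬ 𝒩]
    (hM : M.IsHomogeneous 𝒩) (hL : L.IsHomogeneous 𝒩) {b : B} {e : ℕ} (hb : b ∈ ℬ e) :
    (L ⊔ M.map (LinearMap.lsmul B N b)).IsHomogeneous 𝒩 := fun d m hm => by
  obtain ⟨l, hl, _, ⟨n, hn, rfl⟩, rfl⟩ := Submodule.mem_sup.1 hm
  rw [decompose_add, DirectSum.add_apply, Submodule.coe_add, LinearMap.lsmul_apply]
  refine add_mem (Submodule.mem_sup_left (hL d hl)) ?_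
  obtain hde | hde := lt_or_ge d e
  · rw [decompose_smul_eq_zero_of_mem_of_lt 𝒩 hb hde]
    exact zero_mem _
  · obtain ⟨d, rfl⟩ := Nat.exists_eq_add_of_le' hde
    rw [decompose_smul_add_of_mem 𝒩 hb]
    exact Submodule.mem_sup_right ⟨_, hM d hn, rfl⟩

end Homogeneous

variable [IsScalarTower K B N]

variable (𝒩) in
/-- The Hilbert function `d ↦ dim (L ∩ 𝒩 d)` of a submodule `L` of a graded module. It takes
rational values so that Hilbert functions can be subtracted from one another. -/
noncomputable def hilbertFunction (L : Submodule B N) (d : ℕ) : ℚ :=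
  Module.finrank K ↥(L.restrictScalars K ⊓ 𝒩 d)

lemma hilbertFunction_top (d : ℕ) :
    hilbertFunction 𝒩 (⊤ : Submodule B N) d = Module.finrank K (𝒩 d) := by
  rw [hilbertFunction, Submodule.restrictScalars_top, top_inf_eq]

lemma hilbertFunction_bot (d : ℕ) : hilbertFunction 𝒩 (⊥ : Submodule B N) d = 0 := by
  rw [hilbertFunction, Submodule.restrictScalars_bot, bot_inf_eq, finrank_bot, Nat.cast_zero]

variable [Decomposition 𝒩] {L M : Submodule B N}

lemma hilbertFunction_add_eq_inf_comap_add_sup_map [∀ d, FiniteDimensional K (𝒩 d)]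
    {ℬ : ℕ → Submodule K B} [SetLike.GradedSMul ℬ 𝒩] (hM : M.IsHomogeneous 𝒩)
    (hL : L.IsHomogeneous 𝒩) {b : B} {e : ℕ} (hb : b ∈ ℬ e) (d : ℕ) :
    hilbertFunction 𝒩 M d + hilbertFunction 𝒩 L (d + e) =
      hilbertFunction 𝒩 (M ⊓ L.comap (LinearMap.lsmul B N b)) d +
        hilbertFunction 𝒩 (L ⊔ M.map (LinearMap.lsmul B N b)) (d + e) := by
  let f : N →ₗ[K] N := (LinearMap.lsmul B N b).restrictScalars K
  let S := M.restrictScalars K ⊓ 𝒩 d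
  let T := L.restrictScalars K ⊓ 𝒩 (d + e)
  have hsmul : ∀ n ∈ 𝒩 d, b • n ∈ 𝒩 (d + e) := fun n hn => by
    simpa only [vadd_eq_add, add_comm e d] using SetLike.GradedSMul.smul_mem hb hn
  have hinf : (M ⊓ L.comap (LinearMap.lsmul B N b)).restrictScalars K ⊓ 𝒩 d = S ⊓ T.comap f := by
    ext n
    exact ⟨fun ⟨⟨hnM, hnL⟩, hn⟩ => ⟨⟨hnM, hn⟩, hnL, hsmul n hn⟩,
      fun ⟨⟨hnM, hn⟩, hnL, _⟩ => ⟨⟨hnM, hnL⟩, hn⟩⟩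
  have hsup : (L ⊔ M.map (LinearMap.lsmul B N b)).restrictScalars K ⊓ 𝒩 (d + e) =
      T ⊔ S.map f := by
    refine le_antisymm ?_ (sup_le (inf_le_inf_right _ fun n hn => Submodule.mem_sup_left hn) ?_)
    · rintro m ⟨hm, hmd⟩
      obtain ⟨l, hl, _, ⟨n, hn, rfl⟩, hlm⟩ := Submodule.mem_sup.1 hm
      rw [← decompose_of_mem_same 𝒩 hmd, ← hlm, decompose_add, DirectSum.add_apply,
        Submodule.coe_add, LinearMap.lsmul_apply, decompose_smul_add_of_mem 𝒩 hb]
      exact Submodule.add_mem_sup ⟨hL _ hl, SetLike.coe_mem _⟩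
        ⟨_, ⟨hM d hn, SetLike.coe_mem _⟩, rfl⟩
    · rintro _ ⟨n, ⟨hnM, hn⟩, rfl⟩
      exact ⟨Submodule.mem_sup_right ⟨n, hnM, rfl⟩, hsmul n hn⟩
  have : FiniteDimensional K S := Submodule.finiteDimensional_of_le inf_le_right
  have : FiniteDimensional K T := Submodule.finiteDimensional_of_le inf_le_right
  rw [hilbertFunction, hilbertFunction, hilbertFunction, hilbertFunction, hinf, hsup]
  exact_mod_cast finrank_add_finrank_eq_inf_comap_add_sup_map f S T

variable {ℬ : ℕ → Submodule K B} [GradedAlgebra ℬ] [SetLike.GradedSMul ℬ 𝒩] {s : Set B}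

lemma eventually_hilbertFunction_eq (hs : Algebra.adjoin (ℬ 0) s = ⊤) (hLM : L ≤ M)
    (hL : L.IsHomogeneous 𝒩) (hM : M.FG) (hsM : ∀ b ∈ s, ∀ m ∈ M, b • m ∈ L) :
    ∀ᶠ d in atTop, hilbertFunction 𝒩 M d = hilbertFunction 𝒩 L d := by
  obtain ⟨G, rfl⟩ := hM
  obtain ⟨D, hD⟩ := exists_le_of_fg_of_monotone degreeFiltration_mono
    (exists_mem_degreeFiltration (ℳ := 𝒩)) ⟨G, rfl⟩
  let W : AddSubmonoid N :=
    { carrier := {m | m ∈ Submodule.span B (G : Set N) ∧ ∀ d > D, (decompose 𝒩 m d : N) ∈ L}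
      add_mem' := fun {m m'} hm hm' => ⟨add_mem hm.1 hm'.1, fun d hd => by
        simpa using add_mem (hm.2 d hd) (hm'.2 d hd)⟩
      zero_mem' := by simp }
  have hW : ∀ m ∈ Submodule.span B (G : Set N), m ∈ W := by
    refine forall_mem_span_of_adjoin_eq_top hs (fun c m hm => ?_) (fun b hb m hm => ?_)
      fun m hm => ?_
    · refine ⟨Submodule.smul_mem _ _ hm.1, fun d hd => ?_⟩
      have hcomponent := decompose_smul_add_of_mem 𝒩 c.2 m d
      exact hcomponent ▸ L.smul_mem _ (hm.2 d hd)
    · exact ⟨Submodule.smul_mem _ _ hm.1, fun d _ => hL d (hsM b hb m hm.1)⟩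
    · refine ⟨Submodule.subset_span hm, fun d hd => ?_⟩
      rw [decompose_eq_zero_of_mem_degreeFiltration hd (hD (Submodule.subset_span hm)),
        ZeroMemClass.coe_zero]
      exact zero_mem L
  filter_upwards [eventually_gt_atTop D] with d hd
  have hpieces : (Submodule.span B (G : Set N)).restrictScalars K ⊓ 𝒩 d =
      L.restrictScalars K ⊓ 𝒩 d := by
    refine le_antisymm (fun m hm => ⟨?_, hm.2⟩) (inf_le_inf_right _ hLM)
    rw [← decompose_of_mem_same 𝒩 hm.2]
    exact (hW m hm.1).2 d hd
  rw [hilbertFunction, hilbertFunction, hpieces]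

lemma isEventuallyQuasiPolynomial_hilbertFunction_sub [∀ d, FiniteDimensional K (𝒩 d)]
    [IsNoetherian B N] (hs : Algebra.adjoin (ℬ 0) s = ⊤) {p : ℕ} (hp : 0 < p)
    (hdeg : ∀ b ∈ s, ∃ e, e ∣ p ∧ b ∈ ℬ e) (t : Finset B) (ht : (t : Set B) ⊆ s) (hLM : L ≤ M)
    (hM : M.IsHomogeneous 𝒩) (hL : L.IsHomogeneous 𝒩)
    (hsM : ∀ b ∈ s, b ∉ t → ∀ m ∈ M, b • m ∈ L) :
    IsEventuallyQuasiPolynomial p fun d => hilbertFunction 𝒩 M d - hilbertFunction 𝒩 L d := by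
  classical
  induction t using Finset.induction_on generalizing L M with
  | empty =>
    refine .of_eventually_eq_zero hp ?_
    filter_upwards [eventually_hilbertFunction_eq hs hLM hL (IsNoetherian.noetherian M)
      fun b hb => hsM b hb (Finset.notMem_empty b)] with d hd
    rw [hd, sub_self]
  | insert b t _ ih =>
    rw [Finset.coe_insert, Set.insert_subset_iff] at ht
    obtain ⟨e, hep, hb⟩ := hdeg b ht.1
    let M' := M ⊓ L.comap (LinearMap.lsmul B N b)
    let L' := L ⊔ M.map (LinearMap.lsmul B N b)
    have hLM' : L ≤ M' := le_inf hLM fun l hl => L.smul_mem b hl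
    have hL'M : L' ≤ M := sup_le hLM (Submodule.map_le_iff_le_comap.2 fun m hm => M.smul_mem b hm)
    have hkernel := ih ht.2 hLM' (isHomogeneous_inf_comap_lsmul hM hL hb) hL
      fun a ha hat m hm => by
        obtain rfl | hab := eq_or_ne a b
        · exact hm.2
        · exact hsM a ha (by simp [hab, hat]) m hm.1
    have hcokernel := ih ht.2 hL'M hM (isHomogeneous_sup_map_lsmul hM hL hb)
      fun a ha hat m hm => by
        obtain rfl | hab := eq_or_ne a b
        · exact Submodule.mem_sup_right ⟨m, hm, rfl⟩
        · exact Submodule.mem_sup_left (hsM a ha (by simp [hab, hat]) m hm)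
    refine ((hcokernel.shift e).sub hkernel).of_add_eq_add hep fun d => ?_
    linarith [hilbertFunction_add_eq_inf_comap_add_sup_map hM hL hb d]

variable (𝒩) in
theorem exists_isEventuallyQuasiPolynomial_finrank [Algebra.FiniteType K B]
    (ℬ : ℕ → Submodule K B) [GradedAlgebra ℬ] [SetLike.GradedSMul ℬ 𝒩]
    [∀ d, FiniteDimensional K (𝒩 d)] [IsNoetherian B N] :
    ∃ p > 0, IsEventuallyQuasiPolynomial p fun d => (Module.finrank K (𝒩 d) : ℚ) := by
  obtain ⟨s, hs, hdeg⟩ := exists_finset_adjoin_eq_top_of_finiteType ℬ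
  choose! e he hdeg using hdeg
  have hp : 0 < ∏ b ∈ s, e b := Nat.pos_of_ne_zero (Finset.prod_ne_zero_iff.2 he)
  have hpieces := isEventuallyQuasiPolynomial_hilbertFunction_sub (L := ⊥) (M := ⊤) (𝒩 := 𝒩) hs hp
    (fun b hb => ⟨e b, Finset.dvd_prod_of_mem e hb, hdeg b hb⟩) s subset_rfl bot_le
    (fun _ _ _ => trivial) (fun d m hm => by simp [(Submodule.mem_bot B).1 hm])
    fun b hb hbs => absurd hb hbs
  simp only [hilbertFunction_top, hilbertFunction_bot, sub_zero] at hpieces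
  exact ⟨_, hp, hpieces⟩

end HilbertFunction

section DegreeImage

open MvPolynomial

variable {K B N σ : Type*} [Field K] [CommRing B] [Algebra K B] [AddCommGroup N] [Module K N]
  [Module B N] [IsScalarTower K B N]

/-- The values in `B` of the polynomials whose degree in each variable is at most `j`. When the
parametrization `g` is a Noether normalization these spaces filter `B`, up to finite index, by
subspaces of known dimension. -/
noncomputable def degreeImage (g : MvPolynomial σ K →ₐ[K] B) (j : ℕ) : Submodule K B :=
  (restrictDegree σ K j).map g.toLinearMap

variable (g : MvPolynomial σ K →ₐ[K] B)

lemma degreeImage_mul (i j : ℕ) : degreeImage g i * degreeImage g j = degreeImage g (i + j) := by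
  rw [degreeImage, degreeImage, degreeImage, ← restrictDegree_mul, Submodule.map_mul]

lemma degreeImage_one_pow (j : ℕ) : degreeImage g 1 ^ j = degreeImage g j := by
  rw [degreeImage, degreeImage, ← restrictDegree_one_pow σ K j, Submodule.map_pow]

lemma one_mem_degreeImage (j : ℕ) : 1 ∈ degreeImage g j :=
  ⟨1, restrictTotalDegree_le_restrictDegree _ _ _ ((mem_restrictTotalDegree _ _ _).2 (by simp)),
    map_one g⟩

lemma degreeImage_mono : Monotone (degreeImage g) := fun i j hij => by
  obtain ⟨k, rfl⟩ := Nat.exists_eq_add_of_le hij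
  rw [← degreeImage_mul]
  exact fun b hb => mul_one b ▸ Submodule.mul_mem_mul hb (one_mem_degreeImage g k)

instance finiteDimensional_degreeImage [Finite σ] (j : ℕ) :
    FiniteDimensional K (degreeImage g j) :=
  inferInstanceAs (FiniteDimensional K ((restrictDegree σ K j).map g.toLinearMap))

lemma finrank_degreeImage_le [Fintype σ] (j : ℕ) :
    Module.finrank K (degreeImage g j) ≤ (j + 1) ^ Fintype.card σ :=
  (Submodule.finrank_map_le _ _).trans_eq (finrank_restrictDegree σ K j)

lemma exists_fg_forall_mem_degreeImage_smul [Module.Finite B N] (hg : g.Finite) :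
    ∃ T : Submodule K N, T.FG ∧ ∀ n, ∃ j, n ∈ degreeImage g j • T := by
  algebraize [g.toRingHom]
  let _ : Module (MvPolynomial σ K) N := Module.compHom N g.toRingHom
  have : IsScalarTower (MvPolynomial σ K) B N := ⟨fun P b n => mul_smul (g P) b n⟩
  have : Module.Finite (MvPolynomial σ K) B := hg
  have : Module.Finite (MvPolynomial σ K) N := Module.Finite.trans B N
  obtain ⟨G, hG⟩ := Module.Finite.fg_top (R := MvPolynomial σ K) (M := N)
  refine ⟨Submodule.span K G, ⟨G, rfl⟩, fun n => ?_⟩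
  induction (hG ▸ Submodule.mem_top : n ∈ Submodule.span (MvPolynomial σ K) (G : Set N))
    using Submodule.span_induction with
  | mem n hn =>
    exact ⟨0, one_smul B n ▸ Submodule.smul_mem_smul (one_mem_degreeImage g 0)
      (Submodule.subset_span hn)⟩
  | zero => exact ⟨0, zero_mem _⟩
  | add n n' _ _ hn hn' =>
    obtain ⟨i, hn⟩ := hn
    obtain ⟨j, hn'⟩ := hn'
    exact ⟨max i j, add_mem
      (Submodule.smul_mono_left (degreeImage_mono g (le_max_left i j)) hn)
      (Submodule.smul_mono_left (degreeImage_mono g (le_max_right i j)) hn')⟩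
  | smul P n _ hn =>
    obtain ⟨i, hP⟩ := exists_mem_restrictDegree P
    obtain ⟨j, hn⟩ := hn
    refine ⟨i + j, ?_⟩
    rw [← degreeImage_mul, ← smul_eq_mul, Submodule.smul_assoc]
    exact Submodule.smul_mem_smul ⟨P, hP, rfl⟩ hn

end DegreeImage

section UpperBound

open DirectSum

variable {K B N : Type*} [Field K] [CommRing B] [Algebra K B] [AddCommGroup N] [Module K N]
  [Module B N]

lemma exists_forall_decompose_mem_of_monotone {R M : Type*} [Semiring R] [AddCommMonoid M]
    [Module R M] (ℳ : ℕ → Submodule R M) [Decomposition ℳ] {F : ℕ → Submodule R M}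
    (hF : Monotone F) (hexhaust : ∀ m, ∃ j, m ∈ F j) (m : M) :
    ∃ j, ∀ d, (decompose ℳ m d : M) ∈ F j := by
  classical
  choose level hlevel using hexhaust
  refine ⟨(decompose ℳ m).support.sup fun d => level (decompose ℳ m d : M), fun d => ?_⟩
  by_cases hd : d ∈ (decompose ℳ m).support
  · exact hF (Finset.le_sup (f := fun d => level (decompose ℳ m d : M)) hd) (hlevel _)
  · rw [DFinsupp.notMem_support_iff.1 hd, ZeroMemClass.coe_zero]
    exact zero_mem _

lemma exists_forall_degreeFiltration_le_of_forall_smul_mem {ℬ : ℕ → Submodule K B}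
    [GradedAlgebra ℬ] {𝒩 : ℕ → Submodule K N} [Decomposition 𝒩] [SetLike.GradedSMul ℬ 𝒩]
    [Module.Finite B N] {F : ℕ → Submodule K N} (hF : Monotone F) (hexhaust : ∀ n, ∃ j, n ∈ F j)
    (hzero : ∀ b ∈ ℬ 0, ∀ j, ∀ n ∈ F j, b • n ∈ F j) {s : Set B}
    (hs : Algebra.adjoin (ℬ 0) s = ⊤) (hdeg : ∀ b ∈ s, ∃ e ≠ 0, b ∈ ℬ e) {D : ℕ}
    (hsF : ∀ b ∈ s, ∀ j, ∀ n ∈ F j, b • n ∈ F (j + D)) :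
    ∃ c, ∀ d, degreeFiltration 𝒩 d ≤ F (D * d + c) := by
  obtain ⟨G, hG⟩ := Module.Finite.fg_top (R := B) (M := N)
  choose level hlevel using exists_forall_decompose_mem_of_monotone 𝒩 hF hexhaust
  set c := G.sup level
  let W : AddSubmonoid N :=
    { carrier := {n | ∀ d, (decompose 𝒩 n d : N) ∈ F (D * d + c)}
      add_mem' := fun {m n} hm hn d => by simpa using add_mem (hm d) (hn d)
      zero_mem' := by simp }
  have hW : ∀ n ∈ Submodule.span B (G : Set N), n ∈ W := by
    refine forall_mem_span_of_adjoin_eq_top hs (fun b n hn => ?_) (fun b hb n hn => ?_)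
      fun n hn => ?_
    · intro d
      have hcomponent := decompose_smul_add_of_mem 𝒩 b.2 n d
      exact hcomponent ▸ hzero b b.2 _ _ (hn d)
    · intro d
      obtain ⟨e, he, hbe⟩ := hdeg b hb
      obtain hde | hde := lt_or_ge d e
      · rw [decompose_smul_eq_zero_of_mem_of_lt 𝒩 hbe hde]
        exact zero_mem _
      · obtain ⟨d, rfl⟩ := Nat.exists_eq_add_of_le' hde
        rw [decompose_smul_add_of_mem 𝒩 hbe]
        exact hF (by nlinarith [Nat.pos_of_ne_zero he]) (hsF b hb _ _ (hn d))
    · exact fun d => hF ((Finset.le_sup hn).trans (Nat.le_add_left _ _)) (hlevel n d)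
  refine ⟨c, fun d => degreeFiltration_le_iff.2 fun i hid n hn => ?_⟩
  rw [← decompose_of_mem_same 𝒩 hn]
  exact hF (by gcongr) (hW n (hG ▸ Submodule.mem_top) i)

variable [IsScalarTower K B N]

lemma submodule_smul_left_comm (I J : Submodule K B) (T : Submodule K N) :
    I • J • T = J • I • T := by
  rw [← Submodule.smul_assoc, ← Submodule.smul_assoc, smul_eq_mul, smul_eq_mul, mul_comm]

lemma exists_smul_le_forall_mem_degreeImage_smul {σ : Type*} [Module.Finite B N]
    {g : MvPolynomial σ K →ₐ[K] B} (hg : g.Finite) {I : Submodule K B} [FiniteDimensional K I]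
    (hone : 1 ∈ I) (hmul : I * I ≤ I) :
    ∃ T : Submodule K N, FiniteDimensional K T ∧ I • T ≤ T ∧ ∀ n, ∃ j, n ∈ degreeImage g j • T := by
  obtain ⟨T, hT, hexhaust⟩ := exists_fg_forall_mem_degreeImage_smul (N := N) g hg
  have : FiniteDimensional K T := .of_fg hT
  have hle : T ≤ I • T := fun n hn => one_smul B n ▸ Submodule.smul_mem_smul hone hn
  refine ⟨I • T, inferInstance, ?_, fun n => (hexhaust n).imp fun j hn => smul_mono_right _ hle hn⟩
  rw [← Submodule.smul_assoc]
  exact Submodule.smul_mono_left hmul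

theorem exists_forall_degreeFiltration_le_degreeImage_smul {σ : Type*}
    [Algebra.FiniteType K B] (ℬ : ℕ → Submodule K B) [GradedAlgebra ℬ] [FiniteDimensional K (ℬ 0)]
    (𝒩 : ℕ → Submodule K N) [Decomposition 𝒩] [SetLike.GradedSMul ℬ 𝒩] [Module.Finite B N]
    {g : MvPolynomial σ K →ₐ[K] B} (hg : g.Finite) :
    ∃ T : Submodule K N, FiniteDimensional K T ∧
      ∃ D c, ∀ d, degreeFiltration 𝒩 d ≤ degreeImage g (D * d + c) • T := by
  obtain ⟨s, hs, hdeg⟩ := exists_finset_adjoin_eq_top_of_finiteType ℬ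
  obtain ⟨T, hT, hzero, hexhaust⟩ := exists_smul_le_forall_mem_degreeImage_smul (N := N) hg
    (SetLike.one_mem_graded ℬ) (Submodule.mul_le.2 fun a ha b hb => SetLike.mul_mem_graded ha hb)
  have hmono : Monotone fun j => degreeImage g j • T := fun i j hij =>
    Submodule.smul_mono_left (degreeImage_mono g hij)
  let S := Submodule.span K (s : Set B)
  obtain ⟨D, hD⟩ : ∃ D, S • T ≤ degreeImage g D • T := exists_le_of_fg_of_monotone hmono hexhaust
    (Module.Finite.iff_fg.1 inferInstance)
  have hshift (j : ℕ) : S • degreeImage g j • T ≤ degreeImage g (j + D) • T := by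
    rw [submodule_smul_left_comm, ← degreeImage_mul, ← smul_eq_mul, Submodule.smul_assoc]
    exact smul_mono_right _ hD
  have hstable (j : ℕ) : ℬ 0 • degreeImage g j • T ≤ degreeImage g j • T := by
    rw [submodule_smul_left_comm]
    exact smul_mono_right _ hzero
  exact ⟨T, hT, D, exists_forall_degreeFiltration_le_of_forall_smul_mem hmono hexhaust
    (fun b hb j n hn => hstable j (Submodule.smul_mem_smul hb hn)) hs hdeg
    fun b hb j n hn => hshift j (Submodule.smul_mem_smul (Submodule.subset_span hb) hn)⟩

end UpperBound

section LowerBound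

variable {K B N σ : Type*} [Field K] [CommRing B] [Algebra K B] [AddCommGroup N] [Module K N]
  [Module B N] [IsScalarTower K B N]

lemma exists_forall_degreeImage_le_degreeFiltration [Finite σ] (ℬ : ℕ → Submodule K B)
    [GradedAlgebra ℬ] (g : MvPolynomial σ K →ₐ[K] B) :
    ∃ E, ∀ j, degreeImage g j ≤ degreeFiltration ℬ (E * j) := by
  obtain ⟨E, hE⟩ := exists_le_of_fg_of_monotone degreeFiltration_mono
    (exists_mem_degreeFiltration (ℳ := ℬ))
    (Module.Finite.iff_fg.1 (finiteDimensional_degreeImage g 1))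
  refine ⟨E, fun j => ?_⟩
  rw [← degreeImage_one_pow]
  induction j with
  | zero =>
    rw [pow_zero, Submodule.one_le]
    exact le_degreeFiltration (Nat.zero_le _) (SetLike.one_mem_graded ℬ)
  | succ j ih =>
    rw [pow_succ, Nat.mul_succ]
    exact Submodule.mul_le.2 fun a ha b hb => smul_mem_degreeFiltration (ih ha) (hE hb)

variable [IsDomain B] [Module.IsTorsionFree B N] (𝒩 : ℕ → Submodule K N)
  [∀ d, FiniteDimensional K (𝒩 d)]

lemma exists_forall_pow_le_finrank_degreeFiltration (ℬ : ℕ → Submodule K B) [GradedAlgebra ℬ]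
    [SetLike.GradedSMul ℬ 𝒩] [DirectSum.Decomposition 𝒩] [Nontrivial N] [Fintype σ]
    {g : MvPolynomial σ K →ₐ[K] B} (hg : Function.Injective g) :
    ∃ E a, ∀ j, (j + 1) ^ Fintype.card σ ≤
      Module.finrank K (degreeFiltration 𝒩 (E * j + a)) := by
  obtain ⟨n, hn⟩ := exists_ne (0 : N)
  obtain ⟨a, ha⟩ := exists_mem_degreeFiltration (ℳ := 𝒩) n
  obtain ⟨E, hE⟩ := exists_forall_degreeImage_le_degreeFiltration ℬ g
  refine ⟨E, a, fun j => ?_⟩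
  let evalAt : MvPolynomial σ K →ₗ[K] N :=
    (LinearMap.toSpanSingleton B N n).restrictScalars K ∘ₗ g.toLinearMap
  have hinj : Function.Injective evalAt := (smul_left_injective B hn).comp hg
  have hle : (MvPolynomial.restrictDegree σ K j).map evalAt ≤ degreeFiltration 𝒩 (E * j + a) := by
    rintro _ ⟨P, hP, rfl⟩
    exact smul_mem_degreeFiltration (hE j ⟨P, hP, rfl⟩) ha
  calc (j + 1) ^ Fintype.card σ
      = Module.finrank K (MvPolynomial.restrictDegree σ K j) := (finrank_restrictDegree σ K j).symm
    _ = Module.finrank K ↥((MvPolynomial.restrictDegree σ K j).map evalAt) :=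
        (Submodule.equivMapOfInjective evalAt hinj _).finrank_eq
    _ ≤ Module.finrank K (degreeFiltration 𝒩 (E * j + a)) := Submodule.finrank_mono hle

lemma monotone_finrank_of_mem_one_of_ne_zero {ℬ : ℕ → Submodule K B} [SetLike.GradedSMul ℬ 𝒩]
    {x : B} (hx : x ∈ ℬ 1) (hx0 : x ≠ 0) :
    Monotone fun d => Module.finrank K (𝒩 d) := by
  refine monotone_nat_of_le_succ fun d => ?_
  let f : N →ₗ[K] N := (LinearMap.lsmul B N x).restrictScalars K
  have hinj : Function.Injective f := smul_right_injective N hx0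
  rw [(Submodule.equivMapOfInjective f hinj (𝒩 d)).finrank_eq]
  refine Submodule.finrank_mono ?_
  rintro _ ⟨n, hn, rfl⟩
  exact add_comm 1 d ▸ SetLike.GradedSMul.smul_mem hx hn

end LowerBound
section DimensionGrowth

variable {K B N : Type*} [Field K] [CommRing B] [Algebra K B] [Algebra.FiniteType K B]
  [AddCommGroup N] [Module K N] [Module B N] [IsScalarTower K B N] [Module.Finite B N]

lemma finiteDimensional_of_gradedSMul [Nontrivial B] (ℬ : ℕ → Submodule K B) [GradedAlgebra ℬ]
    [FiniteDimensional K (ℬ 0)] (𝒩 : ℕ → Submodule K N) [DirectSum.Decomposition 𝒩]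
    [SetLike.GradedSMul ℬ 𝒩] (d : ℕ) : FiniteDimensional K (𝒩 d) := by
  obtain ⟨_, _, _, hg⟩ := exists_finite_inj_algHom_of_fg K B
  obtain ⟨_, _, _, _, hle⟩ := exists_forall_degreeFiltration_le_degreeImage_smul ℬ 𝒩 hg
  exact Submodule.finiteDimensional_of_le ((le_degreeFiltration le_rfl).trans (hle d))

theorem isTheta_finrank_degreeFiltration [IsDomain B] [Module.IsTorsionFree B N] [Nontrivial N]
    (ℬ : ℕ → Submodule K B) [GradedAlgebra ℬ] [FiniteDimensional K (ℬ 0)]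
    (𝒩 : ℕ → Submodule K N) [DirectSum.Decomposition 𝒩] [SetLike.GradedSMul ℬ 𝒩]
    {r : ℕ} (hr : ringKrullDim B = r) :
    (fun d => (Module.finrank K (degreeFiltration 𝒩 d) : ℚ)) =Θ[atTop] fun d => (d : ℚ) ^ r := by
  have hfd := finiteDimensional_of_gradedSMul ℬ 𝒩
  obtain ⟨g, hinj, hfinite⟩ := exists_finite_injective_algHom_of_ringKrullDim_eq K hr
  obtain ⟨T, _, D, c, hupper⟩ := exists_forall_degreeFiltration_le_degreeImage_smul ℬ 𝒩 hfinite
  obtain ⟨E, a, hlower⟩ := exists_forall_pow_le_finrank_degreeFiltration 𝒩 ℬ hinj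
  simp only [Fintype.card_fin] at hlower
  have hmono : Monotone fun d => (Module.finrank K (degreeFiltration 𝒩 d) : ℚ) := fun i j hij =>
    Nat.cast_le.2 (Submodule.finrank_mono (degreeFiltration_mono hij))
  refine ⟨isBigO_pow_of_forall_le_mul_pow (fun d => Nat.cast_nonneg _) D c
      (Module.finrank K T) fun d => ?_,
    pow_isBigO_of_monotone_of_forall_pow_le hmono E a fun j => by exact_mod_cast hlower j⟩
  have hle : Module.finrank K (degreeFiltration 𝒩 d) ≤
      (D * d + c + 1) ^ r * Module.finrank K T := by
    calc Module.finrank K (degreeFiltration 𝒩 d)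
        ≤ Module.finrank K ↥(degreeImage g (D * d + c) • T) := Submodule.finrank_mono (hupper d)
      _ ≤ Module.finrank K (degreeImage g (D * d + c)) * Module.finrank K T := finrank_smul_le _ _
      _ ≤ (D * d + c + 1) ^ r * Module.finrank K T := by
          gcongr
          simpa using finrank_degreeImage_le g (D * d + c)
  exact_mod_cast hle

end DimensionGrowth

theorem hilbert_function_quasipolynomial_of_degree_krullDim_sub_one_general
    {K B N : Type*} [Field K] [CommRing B] [IsDomain B] [Algebra K B] [Algebra.FiniteType K B]
    (ℬ : ℕ → Submodule K B) [GradedAlgebra ℬ] [FiniteDimensional K (ℬ 0)]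
    {r : ℕ} (hr : ringKrullDim B = r) {x : B} (hx : x ∈ ℬ 1) (hx0 : x ≠ 0)
    [AddCommGroup N] [Nontrivial N] [Module K N] [Module B N] [IsScalarTower K B N]
    [Module.Finite B N] [Module.IsTorsionFree B N]
    (𝒩 : ℕ → Submodule K N) [DirectSum.Decomposition 𝒩] [SetLike.GradedSMul ℬ 𝒩] :
    ∃ (p : ℕ) (_ : 0 < p) (q : ℕ → ℚ[X]) (A : ℚ),
      0 < A ∧
      (∀ i : ℕ, i < p → (q i).natDegree = r - 1 ∧ (q i).leadingCoeff = A) ∧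
      ∃ D : ℕ, ∀ d : ℕ, D ≤ d →
        (Module.finrank K (𝒩 d) : ℚ) = (q (d % p)).eval (d : ℚ) := by
  have hfd := finiteDimensional_of_gradedSMul ℬ 𝒩
  have : IsNoetherianRing B := Algebra.FiniteType.isNoetherianRing K B
  obtain ⟨p, hp, hquasi⟩ := exists_isEventuallyQuasiPolynomial_finrank 𝒩 ℬ
  have hsum := isTheta_finrank_degreeFiltration ℬ 𝒩 hr
  simp only [finrank_degreeFiltration, Nat.cast_sum] at hsum
  have hmono := monotone_finrank_of_mem_one_of_ne_zero 𝒩 hx hx0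
  exact ⟨p, hp, exists_quasiPolynomial_of_monotone_of_isTheta_sum_range hp hquasi
    (Nat.mono_cast.comp hmono) (fun d => Nat.cast_nonneg _) hsum⟩

/-- Let `B` be a finitely generated graded integral domain over `ℂ`
of Krull dimension `r`, with `B₀ = ℂ` and containing a nonzero degree-one
element, and let `N` be a nonzero finitely generated torsion-free graded
`B`-module.  Then `d ↦ dim_ℂ N_d` agrees for `d ≫ 0` with a quasi-polynomial of
degree `r − 1` whose leading coefficient is a positive constant `A` independent
of the residue class: `dim_ℂ N_d ∼ A · d^(r-1)`. -/
theorem hilbert_function_quasipolynomial_of_degree_krullDim_sub_one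
    (B : Type) [CommRing B] [IsDomain B] [Algebra ℂ B]
    (ℬ : ℕ → Submodule ℂ B) [GradedAlgebra ℬ]
    (hfg : Algebra.FiniteType ℂ B)
    (h0 : ℬ 0 = Submodule.span ℂ {1})
    (hgen : ∀ d : ℕ, 0 < d → (ℬ d : Set B) ⊆ Algebra.adjoin ℂ (⋃ e : ℕ, ((ℬ (e + 1) : Submodule ℂ B) : Set B)))
    (r : ℕ) (hr : ringKrullDim B = r)
    (x : B) (hx : x ∈ ℬ 1) (hx0 : x ≠ 0)
    (N : Type) [AddCommGroup N] [Module ℂ N] [Module B N]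
    [IsScalarTower ℂ B N] [SMulCommClass B ℂ N]
    (𝒩 : ℕ → Submodule ℂ N)
    (hinternal : DirectSum.IsInternal 𝒩)
    (hgr : ∀ (d e : ℕ) (b : B) (n : N), b ∈ ℬ d → n ∈ 𝒩 e → b • n ∈ 𝒩 (d + e))
    (hNfg : Module.Finite B N)
    (htf : ∀ (b : B) (n : N), b • n = 0 → b = 0 ∨ n = 0)
    (hN0 : Nontrivial N) :
    ∃ (p : ℕ) (_ : 0 < p) (q : ℕ → Polynomial ℚ) (A : ℚ),
      0 < A ∧
      (∀ i : ℕ, i < p → (q i).natDegree = r - 1 ∧ (q i).leadingCoeff = A) ∧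
      ∃ D : ℕ, ∀ d : ℕ, D ≤ d →
        (Module.finrank ℂ (𝒩 d) : ℚ) = (q (d % p)).eval (d : ℚ) := by
  let _ := hinternal.chooseDecomposition
  have : SetLike.GradedSMul ℬ 𝒩 := ⟨fun _ _ => hgr _ _ _ _⟩
  have : FiniteDimensional ℂ (ℬ 0) := h0 ▸ inferInstance
  have : Module.IsTorsionFree B N := .of_smul_eq_zero htf
  exact hilbert_function_quasipolynomial_of_degree_krullDim_sub_one_general ℬ hr hx hx0 𝒩
end
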